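/- arXiv:2309.07744 — 4 statements merged into one kernel-verified Lean document; each statement's English description precedes it below -/
import Mathlib

section
/- For every integer d ≥ 2 there exists a constant c > 0 such that for every prime power q and every point set P ⊆ 𝔽_q^d with |P| ≥ 4d·q^{d−1}, the (d+1)-uniform hypergraph H on vertex set P whose edges are the critical coplanar (d+1)-element subsets of P is (c, τ)-bounded, where k = |P|/q and τ = max{k^{−1}·q^{1/d − 1}, k^{−2}·q^{d−2}}. -/
/-- A `(d+1)`-element subset of `𝔽_q^d` is critical coplanar if it is affinely dependent
(coplanar) while every proper subset of it is affinely independent. -/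
def IsCriticalCoplanar (F : Type*) [Field F] (d : ℕ) (t : Finset (Fin d → F)) : Prop :=
  t.card = d + 1 ∧ ¬ AffineIndependent F ((↑) : t → (Fin d → F)) ∧
    ∀ s : Finset (Fin d → F), s ⊂ t → AffineIndependent F ((↑) : s → (Fin d → F))

/-- The edge set of the `(d+1)`-uniform hypergraph on vertex set `P ⊆ 𝔽_q^d` whose edges
are the critical coplanar `(d+1)`-element subsets of `P`. -/
def criticalEdges (F : Type*) [Field F] (d : ℕ) (P : Finset (Fin d → F)) :
    Set (Finset (Fin d → F)) :=
  {t | t ⊆ P ∧ IsCriticalCoplanar F d t}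

open Finset Classical in
lemma cc_span_card {F : Type} [Field F] [Fintype F] {d : ℕ} (W : Finset (Fin d → F)) (j : ℕ)
    (h : W.card ≤ j + 1) :
    (univ.filter (fun x => x ∈ affineSpan F (W : Set (Fin d → F)))).card ≤ Fintype.card F ^ j := by
  rcases W.eq_empty_or_nonempty with rfl | ⟨p, hp⟩
  · simp [AffineSubspace.notMem_bot]
  · have hfin : Module.finrank F (vectorSpan F (W : Set (Fin d → F))) ≤ j := by
      have hpos : 0 < W.card := card_pos.mpr ⟨p, hp⟩
      have := finrank_vectorSpan_image_finset_le F (id : (Fin d → F) → (Fin d → F)) W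
        (n := W.card - 1) (by omega)
      rw [image_id] at this
      omega
    have h1 : (univ.filter (fun x => x ∈ affineSpan F (W : Set (Fin d → F)))).card ≤
        Fintype.card (vectorSpan F (W : Set (Fin d → F))) := by
      rw [← card_univ]
      have hps : p ∈ affineSpan F (W : Set (Fin d → F)) := subset_affineSpan F _ hp
      refine card_le_card_of_injOn
        (fun x => if hx : x ∈ affineSpan F (W : Set (Fin d → F)) then
          ⟨x -ᵥ p, by
            rw [← direction_affineSpan]
            exact AffineSubspace.vsub_mem_direction hx hps⟩ else 0) (by simp) ?_
      intro x hx y hy hxy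
      simp only [coe_filter, mem_univ, true_and, Set.mem_ofPred_eq] at hx hy
      simp only [hx, hy, dite_true, Subtype.mk.injEq] at hxy
      exact vsub_left_injective p hxy
    refine h1.trans ?_
    rw [Module.card_eq_pow_finrank (K := F)]
    exact Nat.pow_le_pow_right Fintype.card_pos hfin

open Finset Classical in
lemma cc_count_step {α : Type} [Fintype α] {n : ℕ} (S : Finset (Fin n → α))
    (T : Finset (Fin (n + 1) → α)) (A : Finset α) (B : (Fin n → α) → Finset α) (D : ℕ)
    (hB : ∀ t ∈ S, (B t).card ≤ D)
    (h : ∀ t ∈ S, ∀ x ∈ A, x ∉ B t → (Fin.cons x t : Fin (n + 1) → α) ∈ T) :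
    S.card * (A.card - D) ≤ T.card := by
  calc S.card * (A.card - D) = ∑ t ∈ S, (A.card - D) := by simp
    _ ≤ ∑ t ∈ S, (A \ B t).card := by
        refine sum_le_sum fun t ht => ?_
        have := le_card_sdiff (B t) A
        have := hB t ht
        omega
    _ = (S.sigma (fun t => A \ B t)).card := by rw [card_sigma]
    _ ≤ T.card := by
        refine card_le_card_of_injOn (fun s => (Fin.cons s.2 s.1 : Fin (n + 1) → α)) ?_ ?_
        · rintro ⟨t, x⟩ hs
          simp only [coe_sigma, Set.mem_sigma_iff, mem_coe, mem_sdiff] at hs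
          exact h t hs.1 x hs.2.1 hs.2.2
        · rintro ⟨t, x⟩ - ⟨t', x'⟩ - he
          have := Fin.cons_injective2 he
          obtain ⟨h1, h2⟩ := this
          dsimp only at h1 h2
          subst h1 h2; rfl

lemma cc_indep_cons {F V : Type} [Field F] [AddCommGroup V] [Module F V] {n : ℕ} (t : Fin n → V)
    (ht : AffineIndependent F t) (x : V) (hx : x ∉ affineSpan F (Set.range t)) :
    AffineIndependent F (Fin.cons x t : Fin (n + 1) → V) := by
  refine AffineIndependent.affineIndependent_of_notMem_span (i := 0) ?_ ?_
  · rw [← affineIndependent_equiv (finSuccAboveEquiv (0 : Fin (n+1)))]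
    convert ht using 1
    funext j
    rw [Function.comp, finSuccAboveEquiv_apply]
    simp
  · rw [Fin.cons_zero]
    convert hx using 3
    ext y
    simp only [Set.mem_image, Set.mem_ofPred_eq, Set.mem_range]
    constructor
    · rintro ⟨j, hj, rfl⟩
      obtain ⟨k, rfl⟩ := Fin.exists_succ_eq.mpr hj
      exact ⟨k, by simp⟩
    · rintro ⟨k, rfl⟩
      exact ⟨k.succ, Fin.succ_ne_zero k, by simp⟩

lemma cc_crit_cons {F V : Type} [Field F] [AddCommGroup V] [Module F V] {n : ℕ} (t : Fin n → V)
    (ht : AffineIndependent F t) (x : V)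
    (hx : ∀ i, x ∉ affineSpan F (t '' {j | j ≠ i})) (i : Fin (n + 1)) :
    AffineIndependent F (fun j : {j // j ≠ i} => (Fin.cons x t : Fin (n + 1) → V) j) := by
  induction i using Fin.cases with
  | zero =>
    rw [← affineIndependent_equiv (finSuccAboveEquiv (0 : Fin (n+1)))]
    convert ht using 1
    funext j
    rw [Function.comp, finSuccAboveEquiv_apply]
    simp
  | succ i =>
    refine AffineIndependent.affineIndependent_of_notMem_span
      (i := ⟨0, (Fin.succ_ne_zero i).symm⟩) ?_ ?_
    · have hne : ∀ y : {y : {j : Fin (n+1) // j ≠ i.succ} // y ≠ ⟨0, (Fin.succ_ne_zero i).symm⟩},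
          (y : {j : Fin (n+1) // j ≠ i.succ}).1 ≠ 0 := fun y hy => y.2 (Subtype.ext hy)
      let e : {y : {j : Fin (n+1) // j ≠ i.succ} // y ≠ ⟨0, (Fin.succ_ne_zero i).symm⟩} ↪ Fin n :=
        ⟨fun y => y.1.1.pred (hne y), fun y z hyz => by
          have := Fin.pred_inj.mp hyz
          exact Subtype.ext (Subtype.ext this)⟩
      convert ht.comp_embedding e using 1
      funext y
      have : (y.1.1 : Fin (n+1)) = (e y).succ := (Fin.succ_pred _ (hne y)).symm
      rw [Function.comp, this, Fin.cons_succ]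
    · show (Fin.cons x t : Fin (n + 1) → V) 0 ∉ _
      rw [Fin.cons_zero]
      convert hx i using 3
      ext y
      simp only [Set.mem_image, Set.mem_ofPred_eq]
      constructor
      · rintro ⟨⟨j, hj'⟩, hj, rfl⟩
        have hj0 : j ≠ 0 := fun h => hj (Subtype.ext h)
        obtain ⟨k, rfl⟩ := Fin.exists_succ_eq.mpr hj0
        exact ⟨k, fun h => hj' (by rw [h]), by simp⟩
      · rintro ⟨k, hk, rfl⟩
        refine ⟨⟨k.succ, fun h => hk (Fin.succ_injective _ h)⟩, ?_, by simp⟩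
        intro h
        exact Fin.succ_ne_zero k (congrArg Subtype.val h)

open Finset Classical in
lemma cc_count_indep {F : Type} [Field F] [Fintype F] {d : ℕ} (hd : 2 ≤ d)
    (A : Finset (Fin d → F)) (n : ℕ) (hn : n ≤ d) :
    (A.card - d * Fintype.card F ^ (d - 2)) ^ n ≤
      (univ.filter (fun t : Fin n → (Fin d → F) =>
        (∀ j, t j ∈ A) ∧ AffineIndependent F t)).card := by
  induction n with
  | zero =>
    rw [pow_zero, Nat.one_le_iff_ne_zero, ← Nat.pos_iff_ne_zero, card_pos]
    refine ⟨Fin.elim0, ?_⟩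
    simp only [mem_filter, mem_univ, true_and]
    exact ⟨fun j => j.elim0, affineIndependent_of_subsingleton F _⟩
  | succ n ih =>
    rw [pow_succ]
    refine (Nat.mul_le_mul_right _ (ih (by omega))).trans ?_
    refine cc_count_step _ _ A
      (fun t => univ.filter (fun x => x ∈ affineSpan F (((univ.image t) : Finset (Fin d → F)) : Set (Fin d → F)))) _ ?_ ?_
    · intro t _
      refine (cc_span_card _ (d - 2) ?_).trans ?_
      · refine card_image_le.trans ?_
        rw [card_univ, Fintype.card_fin]; omega
      · exact Nat.le_mul_of_pos_left _ (by omega)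
    · intro t ht x hx hxB
      simp only [mem_filter, mem_univ, true_and, coe_image, coe_univ, Set.image_univ] at ht hxB ⊢
      refine ⟨fun j => ?_, cc_indep_cons t ht.2 x hxB⟩
      induction j using Fin.cases with
      | zero => simpa using hx
      | succ j => simpa using ht.1 j

open Finset Classical in
lemma cc_count_crit {F : Type} [Field F] [Fintype F] {d : ℕ} (hd : 2 ≤ d)
    (A : Finset (Fin d → F)) :
    (A.card - d * Fintype.card F ^ (d - 2)) ^ (d + 1) ≤
      (univ.filter (fun t : Fin (d + 1) → (Fin d → F) =>
        (∀ j, t j ∈ A) ∧ ∀ i, AffineIndependent F (fun j : {j : Fin (d + 1) // j ≠ i} => t j))).card := by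
  rw [pow_succ]
  refine (Nat.mul_le_mul_right _ (cc_count_indep hd A d le_rfl)).trans ?_
  refine cc_count_step _ _ A
    (fun t => univ.biUnion (fun i => univ.filter (fun x => x ∈ affineSpan F
      ((((univ.erase i).image t) : Finset (Fin d → F)) : Set (Fin d → F))))) _ ?_ ?_
  · intro t _
    refine (card_biUnion_le_card_mul _ _ (Fintype.card F ^ (d - 2)) ?_).trans ?_
    · intro i _
      refine cc_span_card _ (d - 2) ?_
      refine card_image_le.trans ?_
      rw [card_erase_of_mem (mem_univ _), card_univ, Fintype.card_fin]; omega
    · simp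
  · intro t ht x hx hxB
    simp only [mem_filter, mem_univ, true_and, mem_biUnion, not_exists] at ht hxB ⊢
    refine ⟨fun j => ?_, cc_crit_cons t ht.2 x fun i => ?_⟩
    · induction j using Fin.cases with
      | zero => simpa using hx
      | succ j => simpa using ht.1 j
    · have := hxB i
      rw [coe_image, coe_erase, coe_univ] at this
      have hs : ({j | j ≠ i} : Set (Fin d)) = Set.univ \ {i} := by ext y; simp
      rw [hs]
      exact this

lemma cc_ann_le {F : Type} [Field F] {d : ℕ} {ι : Type} (t : ι → (Fin d → F))
    (a : Module.Dual F (Fin d → F)) (b : F) (h : ∀ j, a (t j) = b) :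
    a ∈ (vectorSpan F (Set.range t)).dualAnnihilator := by
  rw [Submodule.mem_dualAnnihilator]
  have : vectorSpan F (Set.range t) ≤ LinearMap.ker a := by
    rw [vectorSpan, Submodule.span_le]
    rintro _ ⟨_, ⟨i, rfl⟩, _, ⟨j, rfl⟩, rfl⟩
    simp [h]
  exact fun w hw => this hw

lemma cc_dep {F : Type} [Field F] {d : ℕ} (t : Fin (d + 1) → (Fin d → F))
    (a : Module.Dual F (Fin d → F)) (ha : a ≠ 0) (b : F) (h : ∀ j, a (t j) = b) :
    ¬ AffineIndependent F t := by
  intro hi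
  have h1 := hi.vectorSpan_eq_top_of_card_eq_finrank_add_one (by simp)
  have h2 := cc_ann_le t a b h
  rw [h1, Submodule.dualAnnihilator_top] at h2
  exact ha (by simpa using h2)

open Finset Classical in
lemma cc_fibre {F : Type} [Field F] [Fintype F] {d : ℕ} (hd : 2 ≤ d) 
    [Fintype (Module.Dual F (Fin d → F))] (t : Fin (d + 1) → (Fin d → F))
    (ht : ∀ i, AffineIndependent F (fun j : {j : Fin (d + 1) // j ≠ i} => t j)) :
    (univ.filter (fun a : Module.Dual F (Fin d → F) => ∀ j, a (t j) = a (t 0))).card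
      ≤ Fintype.card F := by
  set W := vectorSpan F (Set.range (fun j : {j : Fin (d+1) // j ≠ 0} => t j)) with hW
  have h1 : Module.finrank F W = d - 1 := (ht 0).finrank_vectorSpan (by simp; omega)
  have h2 := Subspace.finrank_add_finrank_dualAnnihilator_eq W
  have h3 : Module.finrank F W.dualAnnihilator = 1 := by
    rw [h1] at h2; simp at h2; omega
  have h4 : Fintype.card W.dualAnnihilator = Fintype.card F := by
    rw [Module.card_eq_pow_finrank (K := F), h3, pow_one]
  rw [← h4, ← card_univ]
  calc _ ≤ (univ.filter (fun a : Module.Dual F (Fin d → F) => a ∈ W.dualAnnihilator)).card := by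
        refine card_le_card fun a ha => ?_
        simp only [mem_filter, mem_univ, true_and] at ha ⊢
        exact cc_ann_le _ a (a (t 0)) fun j => ha j
    _ = _ := by rw [card_univ, Fintype.card_subtype]

open Finset Classical in
lemma cc_isCritical {F : Type} [Field F] {d : ℕ} (hd : 2 ≤ d)
    (t : Fin (d + 1) → (Fin d → F))
    (ht : ∀ i, AffineIndependent F (fun j : {j : Fin (d + 1) // j ≠ i} => t j))
    (hdep : ¬ AffineIndependent F t) : IsCriticalCoplanar F d (univ.image t) := by
  have hinj : Function.Injective t := by
    intro i j hij
    obtain ⟨k, hk⟩ : ∃ k : Fin (d + 1), k ∉ ({i, j} : Finset (Fin (d+1))) := by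
      by_contra! hcon
      have h1 : (univ : Finset (Fin (d+1))).card ≤ ({i, j} : Finset (Fin (d+1))).card :=
        card_le_card fun k _ => hcon k
      have h2 : ({i, j} : Finset (Fin (d+1))).card ≤ 2 := card_le_two
      rw [card_univ, Fintype.card_fin] at h1
      omega
    simp only [mem_insert, mem_singleton, not_or] at hk
    have := (ht k).injective (a₁ := ⟨i, fun h => hk.1 h.symm⟩) (a₂ := ⟨j, fun h => hk.2 h.symm⟩) hij
    exact congrArg Subtype.val this
  refine ⟨?_, ?_, ?_⟩
  · rw [card_image_of_injective _ hinj]; simp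
  · intro h
    apply hdep
    let e : Fin (d + 1) ↪ (univ.image t : Finset (Fin d → F)) :=
      ⟨fun j => ⟨t j, mem_image_of_mem _ (mem_univ _)⟩, fun i j hij =>
        hinj (congrArg Subtype.val hij)⟩
    exact h.comp_embedding e
  · intro s hs
    obtain ⟨x, hx, hxs⟩ := exists_of_ssubset hs
    obtain ⟨i, -, rfl⟩ := mem_image.mp hx
    have h1 := (ht i).range
    refine h1.mono (s := (s : Set (Fin d → F))) ?_
    intro y hy
    obtain ⟨j, -, rfl⟩ := mem_image.mp (hs.1 hy)
    exact ⟨⟨j, fun h => hxs (h ▸ hy)⟩, rfl⟩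

open Finset Classical in
lemma cc_tuples_le {F : Type} [Field F] [Fintype F] {d : ℕ} (hd : 2 ≤ d)
    (P : Finset (Fin d → F)) :
    (univ.filter (fun t : Fin (d + 1) → (Fin d → F) =>
        (∀ j, t j ∈ P) ∧ (∀ i, AffineIndependent F (fun j : {j : Fin (d + 1) // j ≠ i} => t j)) ∧
          ¬ AffineIndependent F t)).card ≤ (d + 1) ^ (d + 1) * (criticalEdges F d P).ncard := by
  rw [Set.ncard_eq_toFinset_card _ (Set.toFinite _)]
  refine card_le_mul_card_image_of_maps_to (f := fun t => univ.image t) ?_ _ ?_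
  · intro t ht
    simp only [mem_filter, mem_univ, true_and] at ht
    rw [Set.Finite.mem_toFinset]
    refine ⟨?_, cc_isCritical hd t ht.2.1 ht.2.2⟩
    intro x hx
    obtain ⟨j, -, rfl⟩ := mem_image.mp hx
    exact ht.1 j
  · intro s hs
    rw [Set.Finite.mem_toFinset] at hs
    have hc : s.card = d + 1 := hs.2.1
    calc _ ≤ (Fintype.piFinset (fun _ : Fin (d + 1) => s)).card := by
          refine card_le_card fun t ht => ?_
          rw [mem_filter] at ht
          rw [Fintype.mem_piFinset]
          intro j
          rw [← ht.2]
          exact mem_image_of_mem _ (mem_univ _)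
      _ = _ := by rw [Fintype.card_piFinset_const, hc]

open Finset Classical in
lemma cc_per_functional {F : Type} [Field F] [Fintype F] {d : ℕ} (hd : 2 ≤ d)
    (P : Finset (Fin d → F)) (hP : 4 * d * Fintype.card F ^ (d - 1) ≤ P.card)
    (a : Module.Dual F (Fin d → F)) (ha : a ≠ 0) :
    ((P.card : ℝ) / 2) ^ (d + 1) / (Fintype.card F : ℝ) ^ d ≤
    (((univ.filter (fun t : Fin (d + 1) → (Fin d → F) =>
        (∀ j, t j ∈ P) ∧ (∀ i, AffineIndependent F (fun j : {j : Fin (d + 1) // j ≠ i} => t j)) ∧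
          ¬ AffineIndependent F t)).filter (fun t => ∀ j, a (t j) = a (t 0))).card : ℝ) := by
  set T := (univ.filter (fun t : Fin (d + 1) → (Fin d → F) =>
        (∀ j, t j ∈ P) ∧ (∀ i, AffineIndependent F (fun j : {j : Fin (d + 1) // j ≠ i} => t j)) ∧
          ¬ AffineIndependent F t)).filter (fun t => ∀ j, a (t j) = a (t 0)) with hT
  set D := d * Fintype.card F ^ (d - 2) with hD
  set m : F → ℕ := fun b => (P.filter (fun x => a x = b)).card with hm
  have h1 : ∑ b : F, (m b - D) ^ (d + 1) ≤ T.card := by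
    rw [card_eq_sum_card_fiberwise (f := fun t => a (t 0)) (t := univ) (fun _ _ => by simp)]
    refine sum_le_sum fun b _ => ?_
    refine (cc_count_crit hd _).trans (card_le_card fun t ht => ?_)
    simp only [mem_filter, mem_univ, true_and] at ht
    simp only [hT, mem_filter, mem_univ, true_and]
    have hb : ∀ j, a (t j) = b := fun j => (ht.1 j).2
    exact ⟨⟨⟨fun j => (ht.1 j).1, ht.2, cc_dep t a ha b hb⟩,
      fun j => by rw [hb, hb]⟩, hb 0⟩
  have h2 : ∑ b : F, m b = P.card :=
    (card_eq_sum_card_fiberwise (f := fun x => a x) (t := univ) (fun _ _ => by simp)).symm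
  have h3 : P.card ≤ (∑ b : F, (m b - D)) + Fintype.card F * D := by
    calc P.card = ∑ b : F, m b := h2.symm
      _ ≤ ∑ b : F, ((m b - D) + D) := sum_le_sum fun b _ => by omega
      _ = _ := by rw [sum_add_distrib]; simp
  have h4 : Fintype.card F * D = d * Fintype.card F ^ (d - 1) := by
    rw [hD, show d - 1 = (d - 2) + 1 by omega, pow_succ]; ring
  have h5 : P.card ≤ 2 * ∑ b : F, (m b - D) := by
    rw [h4] at h3
    have : 4 * d * Fintype.card F ^ (d - 1) = 4 * (d * Fintype.card F ^ (d - 1)) := by ring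
    omega
  have h6 : (P.card : ℝ) / 2 ≤ ∑ b : F, ((m b - D : ℕ) : ℝ) := by
    have : (P.card : ℝ) ≤ 2 * ∑ b : F, ((m b - D : ℕ) : ℝ) := by exact_mod_cast h5
    linarith
  have h7 := pow_sum_div_card_le_sum_pow (s := (univ : Finset F))
    (f := fun b => ((m b - D : ℕ) : ℝ)) (fun _ _ => Nat.cast_nonneg _) d
  rw [card_univ] at h7
  calc _ ≤ (∑ b : F, ((m b - D : ℕ) : ℝ)) ^ (d + 1) / (Fintype.card F : ℝ) ^ d := by gcongr
    _ ≤ _ := h7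
    _ ≤ _ := by exact_mod_cast h1

open Finset Classical in
lemma cc_lower {F : Type} [Field F] [Fintype F] {d : ℕ} (hd : 2 ≤ d)
    (P : Finset (Fin d → F)) (hP : 4 * d * Fintype.card F ^ (d - 1) ≤ P.card) :
    (P.card : ℝ) ^ (d + 1) ≤ (2 ^ (d + 2) * ((d : ℝ) + 1) ^ (d + 1)) *
      (Fintype.card F : ℝ) * ((criticalEdges F d P).ncard : ℝ) := by
  haveI : Finite (Module.Dual F (Fin d → F)) := Module.finite_of_finite F
  letI : Fintype (Module.Dual F (Fin d → F)) := Fintype.ofFinite _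
  set T := (univ.filter (fun t : Fin (d + 1) → (Fin d → F) =>
        (∀ j, t j ∈ P) ∧ (∀ i, AffineIndependent F (fun j : {j : Fin (d + 1) // j ≠ i} => t j)) ∧
          ¬ AffineIndependent F t)) with hT
  set q := Fintype.card F with hq
  have hq2 : 2 ≤ q := Fintype.one_lt_card
  have hcard : Fintype.card (Module.Dual F (Fin d → F)) = q ^ d := by
    rw [Module.card_eq_pow_finrank (K := F), Subspace.dual_finrank_eq]; simp [hq]
  set S := (univ : Finset (Module.Dual F (Fin d → F))).erase 0 with hS
  have hScard : S.card = q ^ d - 1 := by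
    rw [hS, card_erase_of_mem (mem_univ _), card_univ, hcard]
  have hdc := sum_card_bipartiteAbove_eq_sum_card_bipartiteBelow (s := S) (t := T)
    (fun a t => ∀ j, a (t j) = a (t 0))
  have hup : ∑ t ∈ T, (S.bipartiteBelow (fun a t => ∀ j, a (t j) = a (t 0)) t).card
      ≤ T.card * q := by
    rw [← smul_eq_mul]
    refine sum_le_card_nsmul _ _ _ fun t ht => ?_
    refine le_trans (card_le_card ?_) (cc_fibre hd t (mem_filter.mp ht).2.2.1)
    intro a ha
    simp only [bipartiteBelow, mem_filter, mem_univ, true_and] at ha ⊢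
    exact ha.2
  have hlo : (S.card : ℝ) * (((P.card : ℝ) / 2) ^ (d + 1) / (q : ℝ) ^ d) ≤
      ∑ a ∈ S, ((T.bipartiteAbove (fun a t => ∀ j, a (t j) = a (t 0)) a).card : ℝ) := by
    rw [← nsmul_eq_mul]
    refine card_nsmul_le_sum _ _ _ fun a ha => ?_
    exact cc_per_functional hd P hP a (mem_erase.mp ha).1
  have hTle := cc_tuples_le hd P
  rw [← hT] at hTle
  have e1 : (S.card : ℝ) * (((P.card : ℝ) / 2) ^ (d + 1) / (q : ℝ) ^ d) ≤ (T.card : ℝ) * q := by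
    refine hlo.trans ?_
    rw [← hdc] at hup
    exact_mod_cast hup
  have e2 : (T.card : ℝ) ≤ ((d : ℝ) + 1) ^ (d + 1) * ((criticalEdges F d P).ncard : ℝ) := by
    exact_mod_cast hTle
  have hqd : 2 ≤ q ^ d := hq2.trans (Nat.le_self_pow (by omega) q)
  have e3 : (q : ℝ) ^ d / 2 ≤ (S.card : ℝ) := by
    have : q ^ d ≤ 2 * S.card := by omega
    have : (q : ℝ) ^ d ≤ 2 * (S.card : ℝ) := by exact_mod_cast this
    linarith
  have hq0 : (0 : ℝ) < q := by positivity
  have e4 : (q : ℝ) ^ d / 2 * (((P.card : ℝ) / 2) ^ (d + 1) / (q : ℝ) ^ d) ≤ 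
      ((d : ℝ) + 1) ^ (d + 1) * ((criticalEdges F d P).ncard : ℝ) * q := by
    refine le_trans (mul_le_mul_of_nonneg_right e3 (by positivity)) (e1.trans ?_)
    exact mul_le_mul_of_nonneg_right e2 hq0.le
  have e5 : (q : ℝ) ^ d / 2 * (((P.card : ℝ) / 2) ^ (d + 1) / (q : ℝ) ^ d) =
      (P.card : ℝ) ^ (d + 1) / 2 ^ (d + 2) := by
    rw [div_pow]; field_simp; ring
  rw [e5, div_le_iff₀ (by positivity)] at e4
  linarith

open Finset Classical in
lemma cc_upper {F : Type} [Field F] [Fintype F] {d : ℕ} (hd : 2 ≤ d)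
    (P U : Finset (Fin d → F)) (i : ℕ) (hi : i ≤ d) (hU : U.card = i) :
    ({t ∈ criticalEdges F d P | U ⊆ t}).ncard ≤ P.card ^ (d - i) * Fintype.card F ^ (d - 1) := by
  set B := (P.powersetCard (d - i)).biUnion (fun R =>
    (univ.filter (fun x => x ∈ affineSpan F ((U ∪ R : Finset (Fin d → F)) : Set (Fin d → F)))).image
      (fun x => insert x (U ∪ R))) with hB
  have h1 : {t ∈ criticalEdges F d P | U ⊆ t} ⊆ (B : Set (Finset (Fin d → F))) := by
    rintro t ⟨⟨htP, hc, hdep, hind⟩, hUt⟩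
    obtain ⟨x, hx⟩ : (t \ U).Nonempty := by
      rw [← card_pos, card_sdiff_of_subset hUt]; omega
    rw [mem_sdiff] at hx
    have hUR : U ∪ (t.erase x) \ U = t.erase x :=
      union_sdiff_of_subset (subset_erase.mpr ⟨hUt, hx.2⟩)
    rw [mem_coe, hB, mem_biUnion]
    refine ⟨(t.erase x) \ U, ?_, ?_⟩
    · rw [mem_powersetCard]
      refine ⟨fun y hy => htP (mem_of_mem_erase (mem_sdiff.mp hy).1), ?_⟩
      rw [card_sdiff_of_subset (subset_erase.mpr ⟨hUt, hx.2⟩), card_erase_of_mem hx.1]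
      omega
    · rw [hUR, mem_image]
      refine ⟨x, ?_, insert_erase hx.1⟩
      simp only [mem_filter, mem_univ, true_and]
      by_contra hns
      apply hdep
      refine AffineIndependent.affineIndependent_of_notMem_span (i := ⟨x, hx.1⟩) ?_ ?_
      · let e : {y : t // y ≠ ⟨x, hx.1⟩} ↪ (t.erase x : Finset (Fin d → F)) :=
          ⟨fun y => ⟨y.1.1, mem_erase.mpr ⟨fun h => y.2 (Subtype.ext h), y.1.2⟩⟩, fun y z h =>
            Subtype.ext (Subtype.ext (congrArg (fun w => w.1) h))⟩
        exact (hind _ (erase_ssubset hx.1)).comp_embedding e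
      · have hs : (((↑) : t → (Fin d → F)) '' {y | y ≠ ⟨x, hx.1⟩}) =
            ((t.erase x : Finset (Fin d → F)) : Set (Fin d → F)) := by
          ext y
          simp only [Set.mem_image, Set.mem_ofPred_eq, mem_coe, mem_erase]
          constructor
          · rintro ⟨z, hz, rfl⟩
            exact ⟨fun h => hz (Subtype.ext h), z.2⟩
          · rintro ⟨h1, h2⟩
            exact ⟨⟨y, h2⟩, fun h => h1 (congrArg Subtype.val h), rfl⟩
        rw [hs]
        exact hns
  calc _ ≤ (B : Set (Finset (Fin d → F))).ncard := Set.ncard_le_ncard h1 (Set.toFinite _)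
    _ = B.card := Set.ncard_coe_finset B
    _ ≤ (P.powersetCard (d - i)).card * Fintype.card F ^ (d - 1) := by
        refine card_biUnion_le_card_mul _ _ _ fun R hR => ?_
        refine card_image_le.trans (cc_span_card _ _ ?_)
        have := card_union_le U R
        have := (mem_powersetCard.mp hR).2
        omega
    _ ≤ _ := by
        rw [card_powersetCard]
        exact Nat.mul_le_mul_right _ (Nat.choose_le_pow _ _)

lemma cc_numeric_mid (d i : ℕ) (n q τ : ℝ) (hi2 : 2 ≤ i) (hid : i ≤ d)
    (hn : 0 < n) (hq : 0 < q) (hnq : n ≤ q ^ d) (hτ : q ^ d / n ^ 2 ≤ τ) :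
    n ^ (d - i) * q ^ (d - 1) ≤ n ^ d / q * τ ^ (i - 1) := by
  have h1 : (q ^ d / n ^ 2) ^ (i - 1) ≤ τ ^ (i - 1) := by gcongr
  refine le_trans ?_ (mul_le_mul_of_nonneg_left h1 (by positivity))
  obtain ⟨j, rfl⟩ := Nat.exists_eq_add_of_le hi2
  obtain ⟨k, rfl⟩ := Nat.exists_eq_add_of_le hid
  set Q := q ^ (2 + j + k) with hQ
  have hQ1 : q ^ (2 + j + k - 1) = Q / q := by
    rw [eq_div_iff hq.ne', hQ, ← pow_succ]; congr 1; omega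
  rw [hQ1, show 2 + j + k - (2 + j) = k by omega, show 2 + j - 1 = j + 1 by omega]
  have h2 : n ^ j ≤ Q ^ j := by gcongr
  have hQ0 : 0 < Q := by positivity
  have e : n ^ (2 + j + k) / q * (Q / n ^ 2) ^ (j + 1) = n ^ k * (Q / q) * (Q ^ j / n ^ j) := by
    rw [div_pow]; field_simp; ring
  rw [e]
  have : 1 ≤ Q ^ j / n ^ j := by rw [one_le_div (by positivity)]; exact h2
  exact le_mul_of_one_le_right (by positivity) this

lemma cc_numeric_top (d : ℕ) (hd : 2 ≤ d) (n q τ : ℝ)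
    (hn : 0 < n) (hq : 0 < q) (hτ : (n / q)⁻¹ * q ^ ((1 : ℝ) / (d : ℝ) - 1) ≤ τ) :
    1 ≤ n ^ d / q * τ ^ d := by
  have h0 : (n / q)⁻¹ * q ^ ((1 : ℝ) / (d : ℝ) - 1) = q ^ ((1 : ℝ) / (d : ℝ)) / n := by
    rw [Real.rpow_sub hq, Real.rpow_one]; field_simp
  rw [h0] at hτ
  have h1 : (q ^ ((1 : ℝ) / (d : ℝ)) / n) ^ d ≤ τ ^ d := by gcongr
  refine le_trans ?_ (mul_le_mul_of_nonneg_left h1 (by positivity))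
  rw [div_pow, one_div, Real.rpow_inv_natCast_pow hq.le (by omega)]
  apply le_of_eq
  field_simp

/-- For `|P| ≥ 4d·q^{d−1}`, the hypergraph of critical coplanar
`(d+1)`-tuples in `P` is `(c,τ)`-bounded with `k = |P|/q` and
`τ = max{k⁻¹·q^{1/d − 1}, k⁻²·q^{d−2}}`: for every `2 ≤ i ≤ d+1`, every `i`-element
subset `U` of `P` is contained in at most `c·(|H|/|P|)·τ^{i−1}` edges. -/
theorem critical_coplanar_hypergraph_bounded (d : ℕ) (hd : 2 ≤ d) :
    ∃ c : ℝ, 0 < c ∧ ∀ q : ℕ, IsPrimePow q →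
      ∀ (F : Type) [Field F] [Fintype F], Fintype.card F = q →
        ∀ P : Finset (Fin d → F), 4 * d * q ^ (d - 1) ≤ P.card →
          ∀ i : ℕ, 2 ≤ i → i ≤ d + 1 →
            ∀ U : Finset (Fin d → F), U ⊆ P → U.card = i →
              (({t ∈ criticalEdges F d P | U ⊆ t}).ncard : ℝ) ≤
                c * (((criticalEdges F d P).ncard : ℝ) / (P.card : ℝ)) *
                  (max (((P.card : ℝ) / (q : ℝ))⁻¹ * (q : ℝ) ^ ((1 : ℝ) / (d : ℝ) - 1))
                    ((((P.card : ℝ) / (q : ℝ))⁻¹) ^ 2 *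
                      (q : ℝ) ^ ((d : ℝ) - 2))) ^ (i - 1) := by
  refine ⟨2 ^ (d + 2) * ((d : ℝ) + 1) ^ (d + 1), by positivity, ?_⟩
  intro q _ F _ _ hF P hP i hi2 hid U hUP hU
  subst hF
  have hlow := cc_lower hd P hP
  have hq0 : (0 : ℝ) < (Fintype.card F : ℝ) := by exact_mod_cast Fintype.card_pos
  have hn0 : (0 : ℝ) < (P.card : ℝ) := by
    have : 0 < P.card := lt_of_lt_of_le (by have := Fintype.card_pos (α := F); positivity) hP
    exact_mod_cast this
  have hnq : (P.card : ℝ) ≤ (Fintype.card F : ℝ) ^ d := by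
    have : P.card ≤ Fintype.card F ^ d := by
      have := P.card_le_univ
      simpa using this
    exact_mod_cast this
  set q : ℝ := (Fintype.card F : ℝ) with hq
  set n : ℝ := (P.card : ℝ) with hn
  set τ := max ((n / q)⁻¹ * q ^ ((1 : ℝ) / (d : ℝ) - 1))
    (((n / q)⁻¹) ^ 2 * q ^ ((d : ℝ) - 2)) with hτ
  have hτ0 : 0 ≤ τ := le_trans (by positivity) (le_max_left _ _)
  have hmain : n ^ d / q ≤ 2 ^ (d + 2) * ((d : ℝ) + 1) ^ (d + 1) *
      (((criticalEdges F d P).ncard : ℝ) / n) := by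
    rw [div_le_iff₀ hq0, ← mul_div_assoc, div_mul_eq_mul_div, le_div_iff₀ hn0, ← pow_succ]
    linarith
  refine le_trans ?_ (mul_le_mul_of_nonneg_right hmain (pow_nonneg hτ0 _))
  rcases Nat.lt_or_ge d i with h | h
  · obtain rfl : i = d + 1 := by omega
    have h1 : ({t ∈ criticalEdges F d P | U ⊆ t}).ncard ≤ 1 := by
      rw [Set.ncard_le_one (Set.toFinite _)]
      rintro s ⟨⟨_, hs, _⟩, hUs⟩ t ⟨⟨_, ht, _⟩, hUt⟩
      rw [← Finset.eq_of_subset_of_card_le hUs (by omega),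
        ← Finset.eq_of_subset_of_card_le hUt (by omega)]
    refine le_trans (by exact_mod_cast h1) (cc_numeric_top d hd n q τ hn0 hq0 (le_max_left _ _))
  · have h1 := cc_upper hd P U i h hU
    refine le_trans (b := n ^ (d - i) * q ^ (d - 1)) (by rw [hn, hq]; exact_mod_cast h1)
      (cc_numeric_mid d i n q τ hi2 h hn0 hq0 hnq ?_)
    refine le_trans (le_of_eq ?_) (le_max_right _ _)
    rw [Real.rpow_sub hq0, Real.rpow_natCast, Real.rpow_two]
    field_simp
end

section
/- For every integer d ≥ 2 there exist a constant c > 0 and a threshold Q such that for every prime power q ≥ Q and every real number k with 4d·q^{d−2} ≤ k ≤ q^{d−1−1/d}, there is a collection 𝒞 of subsets (containers) of 𝔽_q^d satisfying: (i) every general position subset of 𝔽_q^d is contained in some member of 𝒞; (ii) |C| ≤ kq for every C ∈ 𝒞; and (iii) |𝒞| ≤ 2^{c · k^{−1} · q^{d−1} · (log q)²}, where log is base 2. -/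
/-- A set `P ⊆ 𝔽_q^d` is in general position if every `(d+1)`-element subset of `P`
is affinely independent. -/
def IsGenPos (F : Type*) [Field F] (d : ℕ) (P : Set (Fin d → F)) : Prop :=
  ∀ s : Finset (Fin d → F), (↑s : Set (Fin d → F)) ⊆ P → s.card = d + 1 →
    AffineIndependent F ((↑) : s → (Fin d → F))


theorem kw {V : Type*} [DecidableEq V] (adj : V → V → Prop) [DecidableRel adj]
    (β M : ℝ) (hβ1 : β ≤ 1) (N : ℕ) (A₀ : Finset V) (hN : A₀.card < N)
    (hdeg : ∀ B ⊆ A₀, M < B.card → ∃ x ∈ B, β * B.card ≤ (B.filter (adj x)).card) (n : ℕ) :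
    ∀ A ⊆ A₀, (1 - β) ^ n * A.card ≤ M →
      ∃ 𝒞 : Finset (Finset V), (∀ C ∈ 𝒞, (C.card : ℝ) ≤ M) ∧ 𝒞.card ≤ N ^ n ∧
        ∀ I ⊆ A, (∀ x ∈ I, ∀ y ∈ I, ¬ adj x y) → ∃ C ∈ 𝒞, I ⊆ C := by
  induction n with
  | zero =>
    intro A hA h
    refine ⟨{A}, ?_, by simp, fun I hI _ => ⟨A, by simp, hI⟩⟩
    simpa using h
  | succ n ih =>
    have key : ∀ m : ℕ, ∀ A ⊆ A₀, A.card = m → (1 - β) ^ (n+1) * A.card ≤ M →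
      ∃ 𝒞 : Finset (Finset V), (∀ C ∈ 𝒞, (C.card : ℝ) ≤ M) ∧ 𝒞.card ≤ m * N ^ n + 1 ∧
        ∀ I ⊆ A, (∀ x ∈ I, ∀ y ∈ I, ¬ adj x y) → ∃ C ∈ 𝒞, I ⊆ C := by
      intro m
      induction m with
      | zero =>
        intro A hA hc h
        refine ⟨{A}, ?_, by simp, fun I hI _ => ⟨A, by simp, hI⟩⟩
        simp only [Finset.mem_singleton, forall_eq]
        rw [hc] at h ⊢
        simpa using h
      | succ m ihm =>
        intro A hA hc h
        by_cases hM : (A.card : ℝ) ≤ M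
        · exact ⟨{A}, by simpa using hM, by simp, fun I hI _ => ⟨A, by simp, hI⟩⟩
        obtain ⟨x, hx, hd⟩ := hdeg A hA (not_le.1 hM)
        have hb : 0 ≤ 1 - β := by linarith
        obtain ⟨C1, h1, h2, h3⟩ := ihm (A.erase x) ((Finset.erase_subset _ _).trans hA)
          (by rw [Finset.card_erase_of_mem hx, hc]; rfl)
          (le_trans (by gcongr; exact Finset.erase_subset _ _) h)
        obtain ⟨C2, k1, k2, k3⟩ := ih (A.filter (fun y => ¬ adj x y))
          ((Finset.filter_subset _ _).trans hA) (by
            have e := Finset.card_filter_add_card_filter_not (s := A) (adj x)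
            have e' : ((A.filter (adj x)).card : ℝ) + ((A.filter (fun y => ¬ adj x y)).card : ℝ)
              = A.card := by exact_mod_cast e
            refine le_trans ?_ h
            rw [pow_succ, mul_assoc]
            gcongr
            linarith)
        refine ⟨C1 ∪ C2, ?_, ?_, ?_⟩
        · intro C hC
          rcases Finset.mem_union.1 hC with h | h
          · exact h1 _ h
          · exact k1 _ h
        · refine (Finset.card_union_le _ _).trans ?_
          rw [Nat.succ_mul]; omega
        · intro I hI hind
          by_cases hxI : x ∈ I
          · obtain ⟨C, hC, hs⟩ := k3 I (fun y hy => Finset.mem_filter.2 ⟨hI hy, hind x hxI y hy⟩) hind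
            exact ⟨C, Finset.mem_union_right _ hC, hs⟩
          · obtain ⟨C, hC, hs⟩ := h3 I (Finset.subset_erase.2 ⟨hI, hxI⟩) hind
            exact ⟨C, Finset.mem_union_left _ hC, hs⟩
    intro A hA h
    obtain ⟨C, h1, h2, h3⟩ := key _ A hA rfl h
    refine ⟨C, h1, h2.trans ?_, h3⟩
    have : A.card < N := (Finset.card_le_card hA).trans_lt hN
    have hp : 1 ≤ N ^ n := Nat.one_le_pow _ _ (by omega)
    calc A.card * N ^ n + 1 ≤ A.card * N ^ n + N ^ n := by omega
      _ = (A.card + 1) * N ^ n := by ring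
      _ ≤ N * N ^ n := by gcongr; omega
      _ = N ^ (n+1) := by ring

theorem key_map {F : Type} [Field F] (d : ℕ) (hd : 2 ≤ d) (T : Finset (Fin d → F))
    (hT : T.card = d - 1) :
    ∃ (κ : (Fin d → F) → Option F) (h : Option F → Module.Dual F (Fin d → F)) (c : Option F → F),
      (∀ o, h o ≠ 0) ∧ (∀ o, ∀ t ∈ T, h o t = c o) ∧ ∀ x, h (κ x) x = c (κ x) := by
  classical
  obtain ⟨p, hp⟩ : T.Nonempty := by rw [← Finset.card_pos]; omega
  have hW : Module.finrank F (vectorSpan F (T : Set (Fin d → F))) ≤ d - 2 := by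
    have := finrank_vectorSpan_image_finset_le F (id : (Fin d → F) → (Fin d → F)) T
      (n := d - 2) (by omega)
    rwa [Finset.image_id] at this
  set W := vectorSpan F (T : Set (Fin d → F)) with hWd
  have hA : 1 < Module.finrank F W.dualAnnihilator := by
    have := Subspace.finrank_add_finrank_dualAnnihilator_eq W
    rw [Module.finrank_fin_fun] at this
    omega
  have := Module.nontrivial_of_finrank_pos (lt_trans one_pos hA)
  obtain ⟨a, ha⟩ := exists_ne (0 : W.dualAnnihilator)
  obtain ⟨b, hab⟩ := exists_linearIndependent_pair_of_one_lt_finrank (R := F)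
    (M := W.dualAnnihilator) hA (x := a) ha
  have hvan : ∀ g : W.dualAnnihilator, ∀ t ∈ T, (g : Module.Dual F _) t = (g : Module.Dual F _) p := by
    intro g t ht
    have := (Submodule.mem_dualAnnihilator _).1 g.2 (t - p) (vsub_mem_vectorSpan F ht hp)
    rw [map_sub] at this
    exact sub_eq_zero.1 this
  replace hab := LinearIndependent.pair_iff.1 hab
  let H : Option F → W.dualAnnihilator := fun o => o.elim b (fun r => a - r • b)
  refine ⟨fun x => if (b : Module.Dual F _) (x - p) = 0 then none else
    some ((a : Module.Dual F _) (x - p) / (b : Module.Dual F _) (x - p)),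
    fun o => (H o : Module.Dual F _), fun o => (H o : Module.Dual F _) p, ?_, fun o => hvan _, ?_⟩
  · intro o h0
    have h0' : H o = 0 := Subtype.ext h0
    rcases o with _ | r
    · have := hab 0 1 (by simpa [H] using h0')
      simp at this
    · have := hab 1 (-r) (by
        rw [one_smul, neg_smul, ← sub_eq_add_neg]; exact h0')
      simp at this
  · intro x
    rw [← sub_eq_zero, ← map_sub]
    beta_reduce
    split_ifs with h
    · simpa [H] using h
    · simp only [H, Option.elim]
      simp only [Submodule.coe_sub, Submodule.coe_smul, LinearMap.sub_apply, LinearMap.smul_apply, smul_eq_mul]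
      rw [div_mul_cancel₀ _ h, sub_self]

theorem not_indep {F : Type} [Field F] (d : ℕ) (s : Finset (Fin d → F)) (hs : s.card = d + 1)
    (f : Module.Dual F (Fin d → F)) (hf : f ≠ 0) (c : F) (h : ∀ x ∈ s, f x = c) :
    ¬ AffineIndependent F ((↑) : s → (Fin d → F)) := by
  intro hi
  have h1 := hi.finrank_vectorSpan (n := d) (by simpa using hs)
  have h2 : vectorSpan F (Set.range ((↑) : s → (Fin d → F))) = ⊤ := by
    apply Submodule.eq_top_of_finrank_eq
    rw [h1, Module.finrank_fin_fun]
  have h3 : vectorSpan F (Set.range ((↑) : s → (Fin d → F))) ≤ LinearMap.ker f := by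
    rw [vectorSpan_def, Submodule.span_le]
    rintro _ ⟨x, ⟨x, rfl⟩, y, ⟨y, rfl⟩, rfl⟩
    simp [h x x.2, h y y.2]
  rw [h2, top_le_iff, LinearMap.ker_eq_top] at h3
  exact hf h3

theorem inter_card {F : Type} [Field F] [Fintype F] [DecidableEq F] (d : ℕ)
    (f g : Module.Dual F (Fin d → F)) (hfg : LinearIndependent F ![f, g]) (a b : F) :
    (Finset.univ.filter (fun y : Fin d → F => f y = a ∧ g y = b)).card ≤ Fintype.card F ^ (d - 2) := by
  classical
  rcases (Finset.univ.filter (fun y : Fin d → F => f y = a ∧ g y = b)).eq_empty_or_nonempty with h | ⟨y0, hy0⟩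
  · rw [h]; simp
  let W : Submodule F (Module.Dual F (Fin d → F)) := Submodule.span F (Set.range ![f, g])
  have hW : Module.finrank F W = 2 := by
    simpa using finrank_span_eq_card hfg
  have h2 := Subspace.finrank_add_finrank_dualCoannihilator_eq W
  rw [Module.finrank_fin_fun, hW] at h2
  have h3 : Nat.card W.dualCoannihilator = Fintype.card F ^ (d - 2) := by
    rw [Module.natCard_eq_pow_finrank (K := F), Nat.card_eq_fintype_card]
    congr 1; omega
  have h4 : Nat.card W.dualCoannihilator =
      (Finset.univ.filter (fun y => y ∈ W.dualCoannihilator)).card := by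
    rw [Nat.card_eq_fintype_card, Fintype.card_subtype]
  rw [← h3, h4]
  apply Finset.card_le_card_of_injOn (fun y => y - y0)
  · intro y hy
    simp only [Finset.coe_filter, Finset.mem_univ, true_and, Set.mem_ofPred_eq, Finset.mem_filter] at hy hy0
    simp only [Finset.coe_filter, Finset.mem_univ, true_and, Set.mem_ofPred_eq]
    rw [Submodule.mem_dualCoannihilator]
    intro φ hφ
    refine Submodule.span_induction (p := fun φ _ => φ (y - y0) = 0) ?_ ?_ ?_ ?_ hφ
    · rintro _ ⟨i, rfl⟩
      fin_cases i
      · simp [hy.1, hy0.1]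
      · simp [hy.2, hy0.2]
    · simp
    · intro u v _ _ hu hv
      simp only [LinearMap.add_apply, hu, hv, add_zero]
    · intro r u _ hu
      simp only [LinearMap.smul_apply, hu, smul_zero]
  · intro u _ v _ h
    simpa using h

theorem sum_class {V K : Type*} [Fintype K] [DecidableEq K] (B : Finset V) (κ : V → K) :
    B.card ^ 2 ≤ Fintype.card K * ∑ x ∈ B, (B.filter (fun y => κ y = κ x)).card := by
  have h1 : B.card = ∑ o : K, (B.filter (fun y => κ y = o)).card :=
    Finset.card_eq_sum_card_fiberwise (fun _ _ => Finset.mem_coe.2 (Finset.mem_univ _))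
  have h2 : ∑ x ∈ B, (B.filter (fun y => κ y = κ x)).card
      = ∑ o : K, (B.filter (fun y => κ y = o)).card ^ 2 := by
    rw [← Finset.sum_fiberwise (s := B) (g := κ)]
    refine Finset.sum_congr rfl fun o _ => ?_
    rw [sq, ← smul_eq_mul, ← Finset.sum_const]
    refine Finset.sum_congr rfl fun x hx => ?_
    rw [(Finset.mem_filter.1 hx).2]
  rw [h2]
  conv_lhs => rw [h1]
  exact sq_sum_le_card_mul_sum_sq

theorem union_bound {V ι : Type*} [DecidableEq V] [DecidableEq ι] (𝒯 : Finset ι) (A : ι → Finset V) (D : ℕ)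
    (h : ∀ T ∈ 𝒯, ∀ T' ∈ 𝒯, T ≠ T' → (A T ∩ A T').card ≤ D) :
    ∑ T ∈ 𝒯, (A T).card ≤ (𝒯.biUnion A).card + 𝒯.card ^ 2 * D := by
  induction 𝒯 using Finset.induction_on with
  | empty => simp
  | insert T 𝒯 hT ih =>
    have ih := ih (fun a ha b hb => h a (Finset.mem_insert_of_mem ha) b (Finset.mem_insert_of_mem hb))
    rw [Finset.sum_insert hT, Finset.biUnion_insert, Finset.card_insert_of_notMem hT]
    have h1 := Finset.card_union_add_card_inter (A T) (𝒯.biUnion A)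
    have h2 : (A T ∩ 𝒯.biUnion A).card ≤ 𝒯.card * D := by
      rw [Finset.inter_biUnion]
      apply Finset.card_biUnion_le_card_mul
      intro x hx
      exact h T (Finset.mem_insert_self _ _) x (Finset.mem_insert_of_mem hx)
        (fun e => hT (e ▸ hx))
    nlinarith

theorem deg_lemma {V K ι : Type*} [DecidableEq V] [Fintype K] [DecidableEq K] [DecidableEq ι]
    (𝒯 : Finset ι) (κ : ι → V → K) (B : Finset V) (hB : B.Nonempty) (D : ℕ)
    (h : ∀ x ∈ B, ∀ T ∈ 𝒯, ∀ T' ∈ 𝒯, T ≠ T' →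
      (B.filter (fun y => κ T y = κ T x ∧ κ T' y = κ T' x)).card ≤ D) :
    ∃ x ∈ B, 𝒯.card * B.card ≤ Fintype.card K *
      ((B.filter (fun y => ∃ T ∈ 𝒯, κ T y = κ T x)).card + 𝒯.card ^ 2 * D) := by
  by_contra! hcon
  have h1 := Finset.sum_lt_sum_of_nonempty hB hcon
  have h2 : ∀ x ∈ B, ∑ T ∈ 𝒯, (B.filter (fun y => κ T y = κ T x)).card ≤
      (B.filter (fun y => ∃ T ∈ 𝒯, κ T y = κ T x)).card + 𝒯.card ^ 2 * D := by
    intro x hx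
    have := union_bound 𝒯 (fun T => B.filter (fun y => κ T y = κ T x)) D (by
      intro T hT T' hT' hne
      rw [← Finset.filter_and]
      exact h x hx T hT T' hT' hne)
    refine this.trans ?_
    gcongr
    intro y
    simp only [Finset.mem_biUnion, Finset.mem_filter]
    rintro ⟨T, hT, hy, e⟩
    exact ⟨hy, T, hT, e⟩
  have h3 : 𝒯.card * B.card ^ 2 ≤ ∑ x ∈ B, Fintype.card K *
      ((B.filter (fun y => ∃ T ∈ 𝒯, κ T y = κ T x)).card + 𝒯.card ^ 2 * D) := by
    calc 𝒯.card * B.card ^ 2 = ∑ T ∈ 𝒯, B.card ^ 2 := by simp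
      _ ≤ ∑ T ∈ 𝒯, Fintype.card K * ∑ x ∈ B, (B.filter (fun y => κ T y = κ T x)).card :=
        Finset.sum_le_sum fun T _ => sum_class B (κ T)
      _ = ∑ x ∈ B, Fintype.card K * ∑ T ∈ 𝒯, (B.filter (fun y => κ T y = κ T x)).card := by
        rw [← Finset.mul_sum, ← Finset.mul_sum, Finset.sum_comm]
      _ ≤ _ := Finset.sum_le_sum fun x hx => Nat.mul_le_mul_left _ (h2 x hx)
  rw [Finset.sum_const, smul_eq_mul] at h1
  nlinarith

theorem geo (F : Type) [Field F] [Fintype F] (d : ℕ) (hd : 2 ≤ d) (q : ℕ) (hq : Fintype.card F = q)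
    (S : Finset (Fin d → F)) (L : ℕ) (hL1 : 1 ≤ L) (hLq : L ≤ 6 * q)
    (hL : L ≤ S.card.choose (d - 1)) (M : ℝ) (hM : 4 * (L : ℝ) * (q : ℝ) ^ (d - 1) ≤ M) (n : ℕ)
    (hn : (1 - (L : ℝ) / (6 * q)) ^ n * (q : ℝ) ^ d ≤ M) :
    ∃ 𝒞 : Finset (Finset (Fin d → F)), (∀ C ∈ 𝒞, (C.card : ℝ) ≤ M + S.card) ∧
      𝒞.card ≤ (q ^ d + 1) ^ n ∧
      ∀ P : Finset (Fin d → F), IsGenPos F d (P : Set (Fin d → F)) → S ⊆ P → ∃ C ∈ 𝒞, P ⊆ C := by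
  classical
  have hq2 : 2 ≤ q := by
    rw [← hq]; exact Fintype.one_lt_card
  obtain ⟨𝒯, h𝒯, h𝒯c⟩ := Finset.exists_subset_card_eq
    (s := S.powersetCard (d - 1)) (n := L) (by rwa [Finset.card_powersetCard])
  have hTS : ∀ T ∈ 𝒯, T ⊆ S ∧ T.card = d - 1 := fun T hT => Finset.mem_powersetCard.1 (h𝒯 hT)
  have hex : ∀ T : Finset (Fin d → F), ∃ (κ : (Fin d → F) → Option F)
      (h : Option F → Module.Dual F (Fin d → F)) (c : Option F → F), T ∈ 𝒯 →
      (∀ o, h o ≠ 0) ∧ (∀ o, ∀ t ∈ T, h o t = c o) ∧ ∀ x, h (κ x) x = c (κ x) := by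
    intro T
    by_cases hT : T ∈ 𝒯
    · obtain ⟨κ, h, c, H⟩ := key_map d hd T (hTS T hT).2
      exact ⟨κ, h, c, fun _ => H⟩
    · exact ⟨fun _ => none, fun _ => 0, fun _ => 0, fun h => absurd h hT⟩
  choose κ h c H using hex
  let A₀ : Finset (Fin d → F) := Finset.univ.filter (fun x => x ∉ S ∧
    ∀ D ⊆ S, D.card = d → ∀ (f : Module.Dual F (Fin d → F)) (a : F), f ≠ 0 → f x = a →
      ¬ ∀ y ∈ D, f y = a)
  let adj : (Fin d → F) → (Fin d → F) → Prop := fun x y => y ≠ x ∧ ∃ T ∈ 𝒯, κ T y = κ T x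
  have hA₀c : A₀.card ≤ q ^ d := by
    refine (Finset.card_le_univ _).trans ?_
    simp [hq]
  have hdegree : ∀ B ⊆ A₀, M < B.card →
      ∃ x ∈ B, ((L : ℝ) / (6 * q)) * B.card ≤ (B.filter (adj x)).card := by
    intro B hB hMB
    have hLr : (1 : ℝ) ≤ L := by exact_mod_cast hL1
    have hqr : (2 : ℝ) ≤ q := by exact_mod_cast hq2
    have hpow : (q : ℝ) ^ (d - 1) = q * q ^ (d - 2) := by
      rw [← pow_succ']; congr 1; omega
    have hp1 : (1 : ℝ) ≤ (q : ℝ) ^ (d - 2) := one_le_pow₀ (by linarith)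
    have hb1 : 4 * (L : ℝ) * (q * q ^ (d - 2)) ≤ B.card := by rw [← hpow]; linarith
    have hb2 : 4 * (q : ℝ) ≤ B.card := by
      refine le_trans ?_ hb1
      have : (1 : ℝ) ≤ L * q ^ (d - 2) := one_le_mul_of_one_le_of_one_le hLr hp1
      nlinarith
    have hne : B.Nonempty := by
      rw [← Finset.card_pos]
      have : (0 : ℝ) < B.card := by linarith
      exact_mod_cast this
    obtain ⟨x, hx, hle⟩ := deg_lemma 𝒯 κ B hne (q ^ (d - 2)) (by
      intro x hx T hT T' hT' hne
      have hxA := (Finset.mem_filter.1 (hB hx)).2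
      obtain ⟨g1, g2, g3⟩ := H T hT
      obtain ⟨k1, k2, k3⟩ := H T' hT'
      by_cases hli : LinearIndependent F ![h T (κ T x), h T' (κ T' x)]
      · rw [← hq]
        refine le_trans (Finset.card_le_card ?_)
          (inter_card d _ _ hli (c T (κ T x)) (c T' (κ T' x)))
        intro y hy
        obtain ⟨-, e1, e2⟩ := Finset.mem_filter.1 hy
        refine Finset.mem_filter.2 ⟨Finset.mem_univ _, ?_, ?_⟩
        · rw [← e1]; exact g3 y
        · rw [← e2]; exact k3 y
      · exfalso
        rw [LinearIndependent.pair_iff' (g1 _)] at hli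
        push Not at hli
        obtain ⟨r, hr⟩ := hli
        have hr0 : r ≠ 0 := by
          rintro rfl
          exact k1 _ (by rw [← hr, zero_smul])
        have hcc : c T' (κ T' x) = r * c T (κ T x) := by
          rw [← k3, ← g3, ← hr]; simp
        have hU : ∀ y ∈ T ∪ T', h T (κ T x) y = c T (κ T x) := by
          intro y hy
          rcases Finset.mem_union.1 hy with hy | hy
          · exact g2 _ y hy
          · have := k2 (κ T' x) y hy
            rw [hcc, ← hr] at this
            simp only [LinearMap.smul_apply, smul_eq_mul] at this
            exact mul_left_cancel₀ hr0 this
        have hUc : d ≤ (T ∪ T').card := by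
          by_contra hlt
          have e1 : T = T ∪ T' := Finset.eq_of_subset_of_card_le Finset.subset_union_left
            (by rw [(hTS T hT).2]; omega)
          have e2 : T' = T ∪ T' := Finset.eq_of_subset_of_card_le Finset.subset_union_right
            (by rw [(hTS T' hT').2]; omega)
          exact hne (e1.trans e2.symm)
        obtain ⟨D, hD, hDc⟩ := Finset.exists_subset_card_eq hUc
        exact hxA.2 D (hD.trans (Finset.union_subset (hTS T hT).1 (hTS T' hT').1)) hDc
          _ _ (g1 _) (g3 x) (fun y hy => hU y (hD hy)))
    refine ⟨x, hx, ?_⟩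
    rw [h𝒯c, Fintype.card_option, hq] at hle
    have hw : (B.filter (fun y => ∃ T ∈ 𝒯, κ T y = κ T x)).card ≤ (B.filter (adj x)).card + 1 := by
      have : B.filter (fun y => ∃ T ∈ 𝒯, κ T y = κ T x) ⊆ insert x (B.filter (adj x)) := by
        intro y hy
        obtain ⟨y1, y2⟩ := Finset.mem_filter.1 hy
        by_cases e : y = x
        · simp [e]
        · exact Finset.mem_insert_of_mem (Finset.mem_filter.2 ⟨y1, e, y2⟩)
      exact (Finset.card_le_card this).trans (Finset.card_insert_le _ _)
    have hle2 : L * B.card ≤ (q + 1) * ((B.filter (adj x)).card + 1 + L ^ 2 * q ^ (d - 2)) :=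
      hle.trans (by gcongr)
    have hle3 : (L : ℝ) * B.card ≤ (q + 1) * ((B.filter (adj x)).card + 1 + L ^ 2 * q ^ (d - 2)) := by
      exact_mod_cast hle2
    generalize ((B.filter (adj x)).card : ℝ) = w at *
    generalize (B.card : ℝ) = b at *
    generalize (q : ℝ) ^ (d - 2) = D at *
    generalize (L : ℝ) = l at *
    have hw0 : 0 ≤ w + 1 + l ^ 2 * D := by
      by_contra hneg
      push Not at hneg
      nlinarith
    have hle4 : l * b ≤ (3 / 2 * q) * (w + 1 + l ^ 2 * D) := by
      refine hle3.trans ?_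
      gcongr
      linarith
    have h5 : 4 * (q : ℝ) ≤ l * b := by nlinarith
    have h6 : l * (4 * l * (q * D)) ≤ l * b := by gcongr
    rw [div_mul_eq_mul_div, div_le_iff₀ (by positivity)]
    nlinarith
  have hβ : (L : ℝ) / (6 * q) ≤ 1 := by
    rw [div_le_one (by positivity)]
    exact_mod_cast hLq
  obtain ⟨𝒞, c1, c2, c3⟩ := kw adj _ M hβ (q ^ d + 1) A₀ (by omega) hdegree n A₀ subset_rfl (by
    refine le_trans ?_ hn
    have : 0 ≤ 1 - (L : ℝ) / (6 * q) := by linarith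
    gcongr
    exact_mod_cast hA₀c)
  refine ⟨𝒞.image (fun C => C ∪ S), ?_, Finset.card_image_le.trans c2, ?_⟩
  · intro C hC
    obtain ⟨C, hC', rfl⟩ := Finset.mem_image.1 hC
    have := Finset.card_union_le C S
    have h2 : ((C ∪ S).card : ℝ) ≤ C.card + S.card := by exact_mod_cast this
    linarith [c1 C hC']
  · intro P hP hSP
    obtain ⟨C, hC, hs⟩ := c3 (P \ S) (by
      intro x hx
      obtain ⟨hxP, hxS⟩ := Finset.mem_sdiff.1 hx
      refine Finset.mem_filter.2 ⟨Finset.mem_univ _, hxS, ?_⟩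
      intro D hD hDc f a hf hfx hall
      refine not_indep d (insert x D) ?_ f hf a ?_ (hP (insert x D) ?_ ?_)
      · rw [Finset.card_insert_of_notMem (fun hxD => hxS (hD hxD)), hDc]
      · simpa [hfx] using hall
      · exact_mod_cast Finset.insert_subset hxP (hD.trans hSP)
      · rw [Finset.card_insert_of_notMem (fun hxD => hxS (hD hxD)), hDc]) (by
      rintro x hx y hy ⟨hne, T, hT, he⟩
      obtain ⟨hxP, hxS⟩ := Finset.mem_sdiff.1 hx
      obtain ⟨hyP, hyS⟩ := Finset.mem_sdiff.1 hy
      obtain ⟨g1, g2, g3⟩ := H T hT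
      obtain ⟨t1, t2⟩ := hTS T hT
      have hcard : (insert x (insert y T)).card = d + 1 := by
        rw [Finset.card_insert_of_notMem, Finset.card_insert_of_notMem, t2]
        · omega
        · exact fun h => hyS (t1 h)
        · rw [Finset.mem_insert]
          rintro (h | h)
          · exact hne h.symm
          · exact hxS (t1 h)
      refine not_indep d (insert x (insert y T)) hcard (h T (κ T x)) (g1 _) (c T (κ T x)) ?_
        (hP _ ?_ hcard)
      · intro z hz
        rcases Finset.mem_insert.1 hz with rfl | hz
        · exact g3 _
        rcases Finset.mem_insert.1 hz with rfl | hz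
        · rw [← he]; exact g3 _
        · exact g2 _ z hz
      · exact_mod_cast Finset.insert_subset hxP (Finset.insert_subset hyP (t1.trans hSP)))
    refine ⟨C ∪ S, Finset.mem_image_of_mem _ hC, ?_⟩
    intro x hx
    by_cases hxS : x ∈ S
    · exact Finset.mem_union_right _ hxS
    · exact Finset.mem_union_left _ (hs (Finset.mem_sdiff.2 ⟨hx, hxS⟩))

theorem count_small {V : Type*} [Fintype V] [DecidableEq V] (s : ℕ) :
    ((Finset.univ : Finset (Finset V)).filter (fun S => S.card ≤ s)).card ≤ (Fintype.card V + 1) ^ s := by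
  classical
  have e : (Fintype.card V + 1) ^ s = Fintype.card (Fin s → Option V) := by simp
  rw [e, ← Finset.card_univ]
  apply Finset.card_le_card_of_surjOn
    (fun g : Fin s → Option V => Finset.univ.filter (fun v => ∃ i, g i = some v))
  intro S hS
  have hS : S.card ≤ s := by simpa using hS
  refine ⟨fun i => if h : i.1 < S.card then some (S.equivFin.symm ⟨i.1, h⟩ : V) else none, by simp, ?_⟩
  ext v
  simp only [Finset.mem_filter, Finset.mem_univ, true_and]
  constructor
  · rintro ⟨i, hi⟩
    split_ifs at hi with h
    · simp only [Option.some.injEq] at hi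
      rw [← hi]; exact Subtype.prop _
  · intro hv
    refine ⟨⟨(S.equivFin ⟨v, hv⟩).1, lt_of_lt_of_le (Fin.is_lt _) hS⟩, ?_⟩
    simp

theorem assemble (F : Type) [Field F] [Fintype F] (d : ℕ) (hd : 2 ≤ d) (q : ℕ)
    (hq : Fintype.card F = q) (s L n : ℕ) (hL1 : 1 ≤ L) (hLq : L ≤ 6 * q)
    (hL : L ≤ s.choose (d - 1)) (M : ℝ) (hM : 4 * (L : ℝ) * (q : ℝ) ^ (d - 1) ≤ M)
    (hn : (1 - (L : ℝ) / (6 * q)) ^ n * (q : ℝ) ^ d ≤ M) :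
    ∃ 𝒞 : Finset (Finset (Fin d → F)),
      (∀ P : Set (Fin d → F), IsGenPos F d P → ∃ C ∈ 𝒞, P ⊆ ↑C) ∧
      (∀ C ∈ 𝒞, (C.card : ℝ) ≤ M + s) ∧ 𝒞.card ≤ (q ^ d + 1) ^ (s + n) := by
  classical
  have hM0 : 0 ≤ M := le_trans (by positivity) hM
  have hex : ∀ S : Finset (Fin d → F), ∃ 𝒞 : Finset (Finset (Fin d → F)), S.card ≤ s →
      (∀ C ∈ 𝒞, (C.card : ℝ) ≤ M + s) ∧ 𝒞.card ≤ (q ^ d + 1) ^ n ∧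
      ∀ P : Finset (Fin d → F), IsGenPos F d (P : Set (Fin d → F)) →
        (S.card = s ∧ S ⊆ P) ∨ P = S → ∃ C ∈ 𝒞, P ⊆ C := by
    intro S
    by_cases hS : S.card = s
    · obtain ⟨𝒞, h1, h2, h3⟩ := geo F d hd q hq S L hL1 hLq (by rwa [hS]) M hM n hn
      refine ⟨𝒞, fun _ => ⟨by rwa [hS] at h1, h2, fun P hP h => h3 P hP ?_⟩⟩
      rcases h with h | h
      · exact h.2
      · rw [h]
    · refine ⟨{S}, fun hle => ⟨?_, ?_, ?_⟩⟩
      · have : (S.card : ℝ) ≤ s := by exact_mod_cast hle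
        simp only [Finset.mem_singleton, forall_eq]
        linarith
      · rw [Finset.card_singleton]; exact Nat.one_le_pow _ _ (by omega)
      · intro P _ h
        rcases h with h | h
        · exact absurd h.1 hS
        · exact ⟨S, by simp, by rw [h]⟩
  choose f hf using hex
  refine ⟨(Finset.univ.filter (fun S : Finset (Fin d → F) => S.card ≤ s)).biUnion f, ?_, ?_, ?_⟩
  · intro P hP
    have hPf : (P.toFinset : Set (Fin d → F)) = P := Set.coe_toFinset P
    rw [← hPf] at hP ⊢
    generalize P.toFinset = R at *
    obtain ⟨S, hS1, hS2⟩ : ∃ S : Finset (Fin d → F), S.card ≤ s ∧ ((S.card = s ∧ S ⊆ R) ∨ R = S) := by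
      by_cases h : s ≤ R.card
      · obtain ⟨S, h1, h2⟩ := Finset.exists_subset_card_eq h
        exact ⟨S, h2.le, Or.inl ⟨h2, h1⟩⟩
      · exact ⟨R, by omega, Or.inr rfl⟩
    obtain ⟨C, hC, hs⟩ := (hf S hS1).2.2 R hP hS2
    exact ⟨C, Finset.mem_biUnion.2 ⟨S, by simpa using hS1, hC⟩, by exact_mod_cast hs⟩
  · intro C hC
    obtain ⟨S, hS, hC⟩ := Finset.mem_biUnion.1 hC
    exact (hf S (by simpa using hS)).1 C hC
  · rw [pow_add]
    refine (Finset.card_biUnion_le_card_mul _ _ ((q ^ d + 1) ^ n) ?_).trans ?_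
    · intro S hS
      exact (hf S (by simpa using hS)).2.1
    · gcongr
      have := count_small (V := Fin d → F) s
      simpa [hq] using this

set_option maxHeartbeats 1000000 in
/-- The third container theorem for general position sets in `𝔽_q^d`:
for `4d·q^{d−2} ≤ k ≤ q^{d−1−1/d}` there is a container collection of size at most
`2^{c·k⁻¹·q^{d−1}·(log q)²}` whose members have size at most `kq`. -/
theorem container_theorem_Fqd_third (d : ℕ) (hd : 2 ≤ d) :
    ∃ c : ℝ, 0 < c ∧ ∃ Q : ℕ, ∀ q : ℕ, Q ≤ q → IsPrimePow q →
      ∀ (F : Type) [Field F] [Fintype F], Fintype.card F = q →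
        ∀ k : ℝ, 4 * (d : ℝ) * (q : ℝ) ^ ((d : ℝ) - 2) ≤ k →
          k ≤ (q : ℝ) ^ ((d : ℝ) - 1 - 1 / (d : ℝ)) →
          ∃ 𝒞 : Finset (Finset (Fin d → F)),
            (∀ P : Set (Fin d → F), IsGenPos F d P → ∃ C ∈ 𝒞, P ⊆ ↑C) ∧
            (∀ C ∈ 𝒞, (C.card : ℝ) ≤ k * q) ∧
            ((𝒞.card : ℝ) ≤ (2 : ℝ) ^
              (c * k⁻¹ * (q : ℝ) ^ ((d : ℝ) - 1) * (Real.logb 2 q) ^ 2)) := by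
  set K : ℝ := 2 * ((d.factorial : ℝ) + d) with hK
  have hd2 : (2 : ℝ) ≤ d := by exact_mod_cast hd
  have hK0 : 0 < K := by positivity
  refine ⟨((d : ℝ) + 1) * (K + 96 * d + 1), by positivity, ⌈K⌉₊ + 2, ?_⟩
  intro q hQ _ F _ _ hcard k hk1 hk2
  have hq2 : (2 : ℝ) ≤ q := by exact_mod_cast (show 2 ≤ q by omega)
  have hqK : K ≤ q := (Nat.le_ceil K).trans (by exact_mod_cast (show ⌈K⌉₊ ≤ q by omega))
  have hq0 : (0 : ℝ) < q := by linarith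
  set D : ℝ := (q : ℝ) ^ (d - 2) with hD
  have hD1 : 1 ≤ D := one_le_pow₀ (by linarith)
  have e2 : (q : ℝ) ^ ((d : ℝ) - 2) = D := by
    rw [hD, ← Real.rpow_natCast, Nat.cast_sub hd]; norm_num
  have e1' : (q : ℝ) ^ (d - 1) = q * D := by
    rw [hD, ← pow_succ']; congr 1; omega
  have e1 : (q : ℝ) ^ ((d : ℝ) - 1) = q * D := by
    rw [← e1', ← Real.rpow_natCast, Nat.cast_sub (by omega)]; norm_num
  have hsplit : (q : ℝ) ^ ((d : ℝ) - 1 - 1 / (d : ℝ)) = q * D / (q : ℝ) ^ (1 / (d : ℝ)) := by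
    rw [Real.rpow_sub hq0, e1]
  rw [e2] at hk1
  rw [hsplit] at hk2
  rw [e1]
  have hk0 : 0 < k := lt_of_lt_of_le (by positivity) hk1
  set t : ℝ := q * D / k with ht
  have htroot : (q : ℝ) ^ (1 / (d : ℝ)) ≤ t := by
    rw [ht, le_div_iff₀ hk0]
    rwa [le_div_iff₀ (by positivity), mul_comm] at hk2
  have ht1 : 1 ≤ t := le_trans (Real.one_le_rpow (by linarith) (by positivity)) htroot
  have ht0 : 0 < t := by linarith
  have htd : (q : ℝ) ≤ t ^ d := by
    calc (q : ℝ) = ((q : ℝ) ^ (1 / (d : ℝ))) ^ d := by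
          rw [one_div, Real.rpow_inv_natCast_pow hq0.le (by omega)]
      _ ≤ t ^ d := by gcongr
  have hkt : k * t = q * D := by rw [ht]; field_simp
  have ht4 : 4 * d * t ≤ q := by
    have : 4 * d * D * t ≤ q * D := by rw [← hkt]; gcongr
    nlinarith
  set x : ℝ := k / (8 * D) with hx
  have hxt : x * (8 * t) = q := by
    rw [hx]; field_simp; linarith
  have hx1 : 1 ≤ x := by
    rw [hx, le_div_iff₀ (by positivity)]; nlinarith
  obtain ⟨L, hLdef⟩ : ∃ L : ℕ, L = ⌊x⌋₊ := ⟨_, rfl⟩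
  have hL1 : 1 ≤ L := by rw [hLdef]; exact Nat.le_floor (by simpa using hx1)
  have hLr1 : (1 : ℝ) ≤ L := by exact_mod_cast hL1
  have hLx : (L : ℝ) ≤ x := by rw [hLdef]; exact Nat.floor_le (by linarith)
  have hxL : x ≤ 2 * L := by
    have := Nat.lt_floor_add_one x
    rw [← hLdef] at this
    linarith
  have hxq : x ≤ q := by nlinarith
  obtain ⟨a, hadef⟩ : ∃ a : ℕ, a = ⌈t⌉₊ := ⟨_, rfl⟩
  have hat : t ≤ a := by rw [hadef]; exact Nat.le_ceil t
  have ha2 : (a : ℝ) ≤ 2 * t := by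
    have := Nat.ceil_lt_add_one ht0.le
    rw [← hadef] at this
    linarith
  have ha1 : 1 ≤ a := by
    have : (1 : ℝ) ≤ a := by linarith
    exact_mod_cast this
  have hLa : L ≤ a ^ (d - 1) := by
    have h1 : x ≤ t ^ (d - 1) := by
      have : t ^ d = t ^ (d - 1) * t := by rw [← pow_succ]; congr 1; omega
      have h2 : x * t ≤ t ^ (d - 1) * t := by rw [← this]; nlinarith
      exact le_of_mul_le_mul_right h2 ht0
    have h2 : (L : ℝ) ≤ (a : ℝ) ^ (d - 1) := hLx.trans (h1.trans (by gcongr))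
    exact_mod_cast h2
  obtain ⟨s, hs⟩ : ∃ s : ℕ, s = (d.factorial + d) * a := ⟨_, rfl⟩
  have hchoose : L ≤ s.choose (d - 1) := by
    have h1 := Nat.pow_sub_le_descFactorial s (d - 1)
    rw [Nat.descFactorial_eq_factorial_mul_choose] at h1
    have h2 : d.factorial * a ≤ s + 1 - (d - 1) := by
      have : d ≤ d * a := Nat.le_mul_of_pos_right _ ha1
      rw [hs, add_mul]; omega
    have h3 : (d - 1).factorial * a ^ (d - 1) ≤ (d.factorial * a) ^ (d - 1) := by
      rw [mul_pow]
      gcongr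
      exact (Nat.factorial_le (by omega)).trans (Nat.le_self_pow (by omega) _)
    have h4 : (d - 1).factorial * L ≤ (d - 1).factorial * s.choose (d - 1) :=
      (Nat.mul_le_mul_left _ hLa).trans (h3.trans ((Nat.pow_le_pow_left h2 _).trans h1))
    exact Nat.le_of_mul_le_mul_left h4 (Nat.factorial_pos _)
  have hsK : (s : ℝ) ≤ K * t := by
    rw [hs, hK]; push_cast
    have : (0 : ℝ) ≤ (d.factorial : ℝ) + d := by positivity
    nlinarith
  have hkq : 4 * d * D * q ≤ k * q := by gcongr
  have hDq1 : (q : ℝ) ≤ D * q := le_mul_of_one_le_left hq0.le hD1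
  have hkq8 : 8 * (D * q) ≤ k * q := by
    have : 2 * (D * q) ≤ d * (D * q) := by gcongr
    linarith
  have hsM : (s : ℝ) ≤ k * q / 2 := by
    rcases hd.eq_or_lt with h2 | h3
    · have hK8 : K = 8 := by rw [hK, ← h2]; norm_num [Nat.factorial]
      rw [hK8] at hsK
      have h8t : 2 * t ≤ d * t := by gcongr
      linarith
    · have hDq : (q : ℝ) ≤ D := by
        rw [hD]; exact le_self_pow₀ (by linarith) (by omega)
      have h5 : t ≤ q := by nlinarith
      have h6 : K * t ≤ D * q := by
        apply mul_le_mul (hqK.trans hDq) h5 ht0.le (by linarith)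
      linarith
  have hlog : Real.log q ≤ Real.logb 2 q := by
    rw [Real.logb, le_div_iff₀ (Real.log_pos (by norm_num))]
    have h1 : 0 ≤ Real.log q := Real.log_nonneg (by linarith)
    have h2 : Real.log 2 ≤ 1 := by linarith [Real.log_two_lt_d9]
    nlinarith
  have hlog1 : 1 ≤ Real.logb 2 q := by
    rw [Real.le_logb_iff_rpow_le (by norm_num) hq0]; simpa using hq2
  have hln0 : 0 ≤ Real.log q := Real.log_nonneg (by linarith)
  obtain ⟨n, hndef⟩ : ∃ n : ℕ, n = ⌈96 * d * t * Real.log q⌉₊ := ⟨_, rfl⟩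
  have hn1 : 96 * d * t * Real.log q ≤ n := by rw [hndef]; exact Nat.le_ceil _
  have hn2 : (n : ℝ) ≤ 96 * d * t * Real.log q + 1 := by
    rw [hndef]; exact (Nat.ceil_lt_add_one (by positivity)).le
  have hLq : L ≤ 6 * q := by
    have : (L : ℝ) ≤ 6 * q := by linarith
    exact_mod_cast this
  have hM1 : 1 ≤ k * q / 2 := by
    linarith
  have hβ : 1 / (96 * t) ≤ (L : ℝ) / (6 * q) := by
    rw [div_le_div_iff₀ (by positivity) (by positivity)]
    nlinarith
  have hβ1 : (L : ℝ) / (6 * q) ≤ 1 := by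
    rw [div_le_one (by positivity)]; exact_mod_cast hLq
  have hnM : (1 - (L : ℝ) / (6 * q)) ^ n * (q : ℝ) ^ d ≤ k * q / 2 := by
    refine le_trans ?_ hM1
    have h1 : (1 - (L : ℝ) / (6 * q)) ^ n ≤ Real.exp (-(d * Real.log q)) := by
      calc (1 - (L : ℝ) / (6 * q)) ^ n ≤ (Real.exp (-((L : ℝ) / (6 * q)))) ^ n := by
            exact pow_le_pow_left₀ (by linarith) (Real.one_sub_le_exp_neg _) n
        _ = Real.exp (n * (-((L : ℝ) / (6 * q)))) := by rw [Real.exp_nat_mul]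
        _ ≤ _ := by
            apply Real.exp_le_exp.2
            have : d * Real.log q ≤ n * ((L : ℝ) / (6 * q)) := by
              calc d * Real.log q = (96 * d * t * Real.log q) * (1 / (96 * t)) := by field_simp
                _ ≤ n * ((L : ℝ) / (6 * q)) := by gcongr
            linarith
    have h2 : (q : ℝ) ^ d = Real.exp (d * Real.log q) := by
      rw [Real.exp_nat_mul, Real.exp_log hq0]
    calc (1 - (L : ℝ) / (6 * q)) ^ n * (q : ℝ) ^ d
        ≤ Real.exp (-(d * Real.log q)) * Real.exp (d * Real.log q) := by
          rw [h2]; gcongr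
      _ = 1 := by rw [← Real.exp_add]; simp
  have hM4 : 4 * (L : ℝ) * (q : ℝ) ^ (d - 1) ≤ k * q / 2 := by
    rw [e1']
    have : x * (8 * D) = k := by rw [hx]; field_simp
    have h2 : (L : ℝ) * (8 * D) ≤ k := by rw [← this]; gcongr
    nlinarith
  obtain ⟨𝒞, h1, h2, h3⟩ := assemble F d hd q hcard s L n hL1 hLq hchoose (k * q / 2) hM4 hnM
  refine ⟨𝒞, h1, fun C hC => (h2 C hC).trans (by linarith), ?_⟩
  have hN : (q ^ d + 1) ≤ q ^ (d + 1) := by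
    have : 1 ≤ q ^ d := Nat.one_le_pow _ _ (by omega)
    rw [pow_succ]
    nlinarith [show 2 ≤ q by omega]
  have h4 : (𝒞.card : ℝ) ≤ ((q : ℝ) ^ (d + 1)) ^ (s + n) := by
    exact_mod_cast h3.trans (Nat.pow_le_pow_left hN _)
  refine h4.trans ?_
  have h5 : ((q : ℝ) ^ (d + 1)) ^ (s + n) = (2 : ℝ) ^ (Real.logb 2 q * (((d : ℝ) + 1) * (s + n))) := by
    rw [Real.rpow_mul (by norm_num), Real.rpow_logb (by norm_num) (by norm_num) hq0, ← pow_mul,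
      ← Real.rpow_natCast]
    push_cast; rfl
  rw [h5]
  apply Real.rpow_le_rpow_of_exponent_le (by norm_num)
  have h6 : ((d : ℝ) + 1) * (K + 96 * d + 1) * k⁻¹ * (q * D) * Real.logb 2 q ^ 2 =
      Real.logb 2 q * (((d : ℝ) + 1) * ((K + 96 * d + 1) * (t * Real.logb 2 q))) := by
    rw [ht]; field_simp
  rw [h6]
  have h7 : (1 : ℝ) ≤ t * Real.logb 2 q := one_le_mul_of_one_le_of_one_le ht1 hlog1
  have h8 : t ≤ t * Real.logb 2 q := le_mul_of_one_le_right ht0.le hlog1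
  have h9 : 96 * d * t * Real.log q ≤ 96 * d * (t * Real.logb 2 q) := by
    rw [mul_assoc (96 * (d : ℝ))]; gcongr
  have h10 : K * t ≤ K * (t * Real.logb 2 q) := by gcongr
  gcongr
  linarith
end

section
/- For every integer d ≥ 2 there exists a constant c > 0 such that for every δ > 0 there exists Q with the following property for every prime power q ≥ Q. Let S_p be a p-random subset of 𝔽_q^d (each point included independently with probability p). (a) If 0 ≤ p ≤ q^{−d+2/d}·(log q)², then the probability that S_p contains a general position set of size at least c·q^{1/d}·(log q)² is at most δ. (b) If q^{−d+2/d}·(log q)² ≤ p ≤ q^{−d+2d/(d+1)}·(log q)², then the probability that S_p contains a general position set of size at least c·p^{1/2}·q^{d/2}·log q is at most δ. -/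
open scoped Classical

/-- The probability, under the product Bernoulli distribution in which each point of the
finite ground set `V` is included independently with probability `p`, that the random
subset satisfies the event `E`. -/
noncomputable def bernoulliProb (V : Type*) [Fintype V] (p : ℝ)
    (E : Finset V → Prop) : ℝ :=
  ∑ S : Finset V,
    if E S then p ^ S.card * (1 - p) ^ (Fintype.card V - S.card) else 0


namespace RT

set_option linter.unusedSectionVars false

variable {F : Type} [Field F] [Fintype F] {d : ℕ}

/-- affine functional evaluation -/
def ev (w : (Fin d → F) × F) (x : Fin d → F) : F := w.1 ⬝ᵥ x + w.2

/-- every hyperplane contains at most d points of P -/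
def GPF (P : Finset (Fin d → F)) : Prop :=
  ∀ w : (Fin d → F) × F, w ≠ 0 → (P.filter (fun x => ev w x = 0)).card ≤ d

lemma ev_add (w w' : (Fin d → F) × F) (x) : ev (w + w') x = ev w x + ev w' x := by
  simp [ev, add_dotProduct]; ring

lemma ev_smul (a : F) (w : (Fin d → F) × F) (x) : ev (a • w) x = a * ev w x := by
  simp [ev, smul_dotProduct]; ring

lemma GPF.mono {P P' : Finset (Fin d → F)} (h : GPF P) (hs : P' ⊆ P) : GPF P' := by
  intro w hw
  exact (Finset.card_le_card (Finset.filter_subset_filter _ hs)).trans (h w hw)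

lemma gpf_of_isGenPos (P : Finset (Fin d → F)) (h : IsGenPos F d ↑P) : GPF P := by
  intro w hw
  by_contra hc
  push Not at hc
  obtain ⟨s, hs, hcard⟩ := Finset.exists_subset_card_eq (Nat.succ_le_of_lt hc)
  have hsP : s ⊆ P := hs.trans (Finset.filter_subset _ _)
  have hsv : ∀ x ∈ s, ev w x = 0 := fun x hx => (Finset.mem_filter.1 (hs hx)).2
  have hai := h s (by exact_mod_cast hsP) hcard
  have htop := hai.vectorSpan_eq_top_of_card_eq_finrank_add_one (by simp [hcard])
  have hker : (⊤ : Submodule F (Fin d → F)) ≤ LinearMap.ker (dotProductBilin F F w.1) := by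
    rw [← htop, vectorSpan_def, Submodule.span_le]
    rintro _ ⟨_, ⟨⟨x, hx⟩, rfl⟩, _, ⟨⟨y, hy⟩, rfl⟩, rfl⟩
    have h1 := hsv x hx
    have h2 := hsv y hy
    simp only [ev] at h1 h2
    simp [dotProduct_sub]
    linear_combination h1 - h2
  have hw1 : w.1 = 0 := by
    funext i
    have : Pi.single i (1:F) ∈ LinearMap.ker (dotProductBilin F F w.1) := hker trivial
    simpa using this
  have hne : s.Nonempty := by
    rw [← Finset.card_pos, hcard]; omega
  obtain ⟨x, hx⟩ := hne
  have := hsv x hx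
  simp [ev, hw1] at this
  exact hw (Prod.ext hw1 this)

lemma exists_pencil (hd : 2 ≤ d) (I : Finset (Fin d → F)) (hI : I.card = d - 1) :
    ∃ h : Option F → (Fin d → F) × F, (∀ k, h k ≠ 0) ∧ (∀ k, ∀ z ∈ I, ev (h k) z = 0) ∧
      ∀ x, ∃ k, ev (h k) x = 0 := by
  let φ : ((Fin d → F) × F) →ₗ[F] (I → F) :=
    { toFun := fun w z => ev w z.1
      map_add' := fun a b => by funext z; exact ev_add a b z.1
      map_smul' := fun a b => by funext z; exact ev_smul a b z.1 }
  have h1 := LinearMap.finrank_range_add_finrank_ker φ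
  have h2 : Module.finrank F (LinearMap.range φ) ≤ d - 1 := by
    refine (Submodule.finrank_le _).trans ?_
    simp [hI]
  have h3 : Module.finrank F ((Fin d → F) × F) = d + 1 := by simp
  have h4 : 1 < Module.finrank F (LinearMap.ker φ) := by omega
  have : Nontrivial (LinearMap.ker φ) := Module.nontrivial_of_finrank_pos (R := F) (by omega)
  obtain ⟨⟨u, hu⟩, hu0⟩ := exists_ne (0 : LinearMap.ker φ)
  obtain ⟨⟨v, hv⟩, huv⟩ := exists_linearIndependent_pair_of_one_lt_finrank h4 hu0
  rw [LinearIndependent.pair_iff] at huv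
  have huI : ∀ z ∈ I, ev u z = 0 := fun z hz => congrFun (LinearMap.mem_ker.1 hu) ⟨z, hz⟩
  have hvI : ∀ z ∈ I, ev v z = 0 := fun z hz => congrFun (LinearMap.mem_ker.1 hv) ⟨z, hz⟩
  refine ⟨fun k => k.elim u (fun r => (-r) • u + v), ?_, ?_, ?_⟩
  · rintro (_ | r)
    · simpa using hu0
    · intro h0
      have := huv (-r) 1 (by ext1; simpa using h0)
      simp at this
  · rintro (_ | r) z hz
    · simpa using huI z hz
    · simp only [Option.elim, ev_add, ev_smul, huI z hz, hvI z hz]; simp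
  · intro x
    by_cases hx : ev u x = 0
    · exact ⟨none, by simpa using hx⟩
    · refine ⟨some (ev v x / ev u x), ?_⟩
      simp only [Option.elim, ev_add, ev_smul]
      field_simp
      ring

lemma card_two (w w' : (Fin d → F) × F) (hli : LinearIndependent F ![w, w']) :
    (Finset.univ.filter (fun y => ev w y = 0 ∧ ev w' y = 0)).card ≤ Fintype.card F ^ (d - 2) := by
  set Y := Finset.univ.filter (fun y => ev w y = 0 ∧ ev w' y = 0) with hY
  rcases Y.eq_empty_or_nonempty with h0 | ⟨y0, hy0⟩
  · simp [h0]
  have hy0' := (Finset.mem_filter.1 hy0).2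
  have hli1 : LinearIndependent F ![w.1, w'.1] := by
    rw [LinearIndependent.pair_iff] at hli ⊢
    intro s t hst
    apply hli
    have h1 : ev (s • w + t • w') y0 = 0 := by
      rw [ev_add, ev_smul, ev_smul, hy0'.1, hy0'.2]; simp
    have h2 : (s • w + t • w').1 = 0 := by simpa using hst
    rw [ev, h2] at h1
    exact Prod.ext h2 (by simpa using h1)
  let M : Matrix (Fin 2) (Fin d) F := Matrix.of ![w.1, w'.1]
  have hr : M.rank = 2 := by
    have := LinearIndependent.rank_matrix (M := M) (by exact hli1)
    simpa using this
  have h1 := LinearMap.finrank_range_add_finrank_ker M.mulVecLin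
  rw [← Matrix.rank, hr] at h1
  have h3 : Module.finrank F (Fin d → F) = d := by simp
  have h4 : Module.finrank F (LinearMap.ker M.mulVecLin) = d - 2 := by omega
  have h5 := Module.card_eq_pow_finrank (K := F) (V := LinearMap.ker M.mulVecLin)
  rw [h4] at h5
  rw [← h5, ← Fintype.card_coe]
  refine Fintype.card_le_of_injective
    (fun y : Y => (⟨y.1 - y0, ?_⟩ : LinearMap.ker M.mulVecLin)) ?_
  · have hy := (Finset.mem_filter.1 y.2).2
    simp only [ev] at hy hy0'
    rw [LinearMap.mem_ker]
    funext i
    fin_cases i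
    · simp [M, Matrix.mulVec, dotProduct_sub]
      linear_combination hy.1 - hy0'.1
    · simp [M, Matrix.mulVec, dotProduct_sub]
      linear_combination hy.2 - hy0'.2
  · intro a b hab
    have h := congrArg Subtype.val hab
    exact Subtype.ext (sub_left_injective h)

lemma card_sq_le (A : Finset (Fin d → F)) (κ : (Fin d → F) → Option F) :
    (A.card : ℝ) ^ 2 ≤ ((Fintype.card F : ℝ) + 1) *
      ∑ x ∈ A, ((A.filter (fun y => κ y = κ x)).card : ℝ) := by
  have h1 : (A.card : ℝ) = ∑ k : Option F, ((A.filter (fun y => κ y = k)).card : ℝ) := by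
    have := Finset.card_eq_sum_card_fiberwise (f := κ) (s := A) (t := Finset.univ)
      (by intro x _; simp)
    exact_mod_cast this
  have h2 : ∑ x ∈ A, ((A.filter (fun y => κ y = κ x)).card : ℝ) =
      ∑ k : Option F, ((A.filter (fun y => κ y = k)).card : ℝ) ^ 2 := by
    rw [← Finset.sum_fiberwise A κ]
    refine Finset.sum_congr rfl fun k _ => ?_
    rw [Finset.sum_congr rfl (g := fun _ => ((A.filter (fun y => κ y = k)).card : ℝ))]
    · simp [sq]
    · intro x hx
      rw [(Finset.mem_filter.1 hx).2]
  rw [h2, h1]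
  have := sq_sum_le_card_mul_sum_sq (s := (Finset.univ : Finset (Option F)))
    (f := fun k => ((A.filter (fun y => κ y = k)).card : ℝ))
  simpa using this

lemma lin_indep (hd : 2 ≤ d) (w w' : (Fin d → F) × F) (hw : w ≠ 0) (hw' : w' ≠ 0)
    (R I J : Finset (Fin d → F)) (hIR : I ⊆ R) (hJR : J ⊆ R) (hI : I.card = d - 1)
    (hJ : J.card = d - 1) (hIJ : J ≠ I) (x : Fin d → F) (hxR : x ∉ R) (hG : GPF (insert x R))
    (hwI : ∀ z ∈ I, ev w z = 0) (hwJ : ∀ z ∈ J, ev w' z = 0) (hwx : ev w x = 0) :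
    LinearIndependent F ![w, w'] := by
  rw [LinearIndependent.pair_iff' hw]
  rintro a rfl
  have ha : a ≠ 0 := by rintro rfl; simp at hw'
  have hJ0 : ∀ z ∈ J, ev w z = 0 := by
    intro z hz
    have := hwJ z hz
    rw [ev_smul] at this
    exact (mul_eq_zero.1 this).resolve_left ha
  have h1 := hG w hw
  have hsub : insert x (I ∪ J) ⊆ (insert x R).filter (fun x => ev w x = 0) := by
    intro z hz
    rw [Finset.mem_insert, Finset.mem_union] at hz
    rw [Finset.mem_filter, Finset.mem_insert]
    rcases hz with rfl | hz | hz
    · exact ⟨Or.inl rfl, hwx⟩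
    · exact ⟨Or.inr (hIR hz), hwI z hz⟩
    · exact ⟨Or.inr (hJR hz), hJ0 z hz⟩
  have h2 := Finset.card_le_card hsub
  rw [Finset.card_insert_of_notMem (fun h => hxR (Finset.union_subset hIR hJR h))] at h2
  have h3 : I.card < (I ∪ J).card := by
    apply Finset.card_lt_card
    refine ⟨Finset.subset_union_left, fun h => hIJ ?_⟩
    exact Finset.eq_of_subset_of_card_le (Finset.subset_union_right.trans h) (by omega)
  omega

lemma supersat (hd : 2 ≤ d) (h : Finset (Fin d → F) → Option F → (Fin d → F) × F)
    (κ : Finset (Fin d → F) → (Fin d → F) → Option F)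
    (hh0 : ∀ I, I.card = d - 1 → ∀ k, h I k ≠ 0)
    (hhI : ∀ I, I.card = d - 1 → ∀ k, ∀ z ∈ I, ev (h I k) z = 0)
    (hκ : ∀ I, I.card = d - 1 → ∀ x, ev (h I (κ I x)) x = 0)
    (R : Finset (Fin d → F)) (C : Finset (Finset (Fin d → F)))
    (hC : ∀ I ∈ C, I ⊆ R ∧ I.card = d - 1) (hC1 : 1 ≤ C.card)
    (A : Finset (Fin d → F)) (hA : ∀ x ∈ A, x ∉ R ∧ GPF (insert x R))
    (hs : 16 * C.card * Fintype.card F ^ (d - 1) ≤ A.card) :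
    ∃ x ∈ A, (C.card : ℝ) / (4 * Fintype.card F) * A.card ≤
      ((A.filter (fun y => y ≠ x ∧ ∃ I ∈ C, κ I y = κ I x)).card : ℝ) := by
  set q := Fintype.card F with hq
  have hq1 : 1 ≤ q := Fintype.card_pos
  set T := C.card with hT
  have hpt : ∀ x ∈ A, ∑ I ∈ C, (((A.filter (fun y => κ I y = κ I x)).card : ℝ) - 1
      - T * q ^ (d - 2)) ≤
      ((A.filter (fun y => y ≠ x ∧ ∃ I ∈ C, κ I y = κ I x)).card : ℝ) := by
    intro x hx
    obtain ⟨hxR, hG⟩ := hA x hx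
    let B' : Finset (Fin d → F) → Finset (Fin d → F) := fun I =>
      A.filter (fun y => y ≠ x ∧ κ I y = κ I x ∧ ∀ J ∈ C, J ≠ I → κ J y ≠ κ J x)
    have hsub : C.biUnion B' ⊆ A.filter (fun y => y ≠ x ∧ ∃ I ∈ C, κ I y = κ I x) := by
      intro y hy
      simp only [Finset.mem_biUnion, B', Finset.mem_filter] at hy ⊢
      obtain ⟨I, hI, h1, h2, h3, h4⟩ := hy
      exact ⟨h1, h2, I, hI, h3⟩
    have hdis : (↑C : Set (Finset (Fin d → F))).PairwiseDisjoint B' := by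
      intro I hI J hJ hne
      rw [Function.onFun, Finset.disjoint_left]
      intro y hy hy'
      simp only [B', Finset.mem_filter] at hy hy'
      exact hy.2.2.2 J hJ hne.symm hy'.2.2.1
    have h1 := Finset.card_le_card hsub
    rw [Finset.card_biUnion hdis] at h1
    refine le_trans ?_ (Nat.cast_le.2 h1)
    rw [Nat.cast_sum]
    refine Finset.sum_le_sum fun I hI => ?_
    have h2 : A.filter (fun y => κ I y = κ I x) ⊆ insert x (B' I ∪ (C.erase I).biUnion (fun J =>
        Finset.univ.filter (fun y => ev (h I (κ I x)) y = 0 ∧ ev (h J (κ J x)) y = 0))) := by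
      intro y hy
      rw [Finset.mem_filter] at hy
      rw [Finset.mem_insert, Finset.mem_union]
      by_cases hyx : y = x
      · exact Or.inl hyx
      right
      by_cases hall : ∀ J ∈ C, J ≠ I → κ J y ≠ κ J x
      · left
        exact Finset.mem_filter.2 ⟨hy.1, hyx, hy.2, hall⟩
      · right
        push Not at hall
        obtain ⟨J, hJ, hne, hJy⟩ := hall
        rw [Finset.mem_biUnion]
        refine ⟨J, Finset.mem_erase.2 ⟨hne, hJ⟩, ?_⟩
        simp only [Finset.mem_filter, Finset.mem_univ, true_and]
        rw [← hy.2, ← hJy]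
        exact ⟨hκ I (hC I hI).2 y, hκ J (hC J hJ).2 y⟩
    have h3 := (Finset.card_le_card h2).trans (Finset.card_insert_le _ _)
    have h4 := Finset.card_union_le (B' I) ((C.erase I).biUnion (fun J =>
        Finset.univ.filter (fun y => ev (h I (κ I x)) y = 0 ∧ ev (h J (κ J x)) y = 0)))
    have h5 : ((C.erase I).biUnion (fun J =>
        Finset.univ.filter (fun y => ev (h I (κ I x)) y = 0 ∧ ev (h J (κ J x)) y = 0))).card
        ≤ T * q ^ (d - 2) := by
      refine (Finset.card_biUnion_le_card_mul _ _ (q ^ (d - 2)) ?_).trans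
        (Nat.mul_le_mul_right _ (Finset.card_le_card (Finset.erase_subset _ _)))
      intro J hJ
      rw [Finset.mem_erase] at hJ
      apply card_two
      have cI := hC I hI
      have cJ := hC J hJ.2
      exact lin_indep hd _ _ (hh0 I cI.2 _) (hh0 J cJ.2 _) R I J cI.1 cJ.1 cI.2 cJ.2 hJ.1 x hxR hG
        (hhI I cI.2 _) (hhI J cJ.2 _) (hκ I cI.2 x)
    have h6 : (A.filter (fun y => κ I y = κ I x)).card ≤ (B' I).card + T * q ^ (d - 2) + 1 := by
      omega
    have h7 : ((A.filter (fun y => κ I y = κ I x)).card : ℝ) ≤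
      (B' I).card + T * q ^ (d - 2) + 1 := by exact_mod_cast h6
    linarith
  have hqR : (1:ℝ) ≤ q := by exact_mod_cast hq1
  have hTR : (1:ℝ) ≤ T := by exact_mod_cast hC1
  have hsR : 16 * (T:ℝ) * (q * q ^ (d - 2)) ≤ A.card := by
    rw [← pow_succ', show d - 2 + 1 = d - 1 by omega]
    exact_mod_cast hs
  have hpow : (1:ℝ) ≤ (q:ℝ) ^ (d - 2) := one_le_pow₀ hqR
  have hApos : 0 < A.card := by
    refine lt_of_lt_of_le ?_ hs
    positivity
  apply Finset.exists_le_of_sum_le (Finset.card_pos.1 hApos)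
  refine le_trans ?_ (Finset.sum_le_sum hpt)
  rw [Finset.sum_comm]
  have hAR : (0:ℝ) < A.card := by exact_mod_cast hApos
  have hI : ∀ I ∈ C, (A.card : ℝ) * (A.card / (4 * q)) ≤
      ∑ x ∈ A, (((A.filter (fun y => κ I y = κ I x)).card : ℝ) - 1 - T * q ^ (d - 2)) := by
    intro I _
    have h1 := card_sq_le A (κ I)
    rw [← hq] at h1
    simp only [Finset.sum_sub_distrib, Finset.sum_const, nsmul_eq_mul]
    set S := ∑ x ∈ A, ((A.filter (fun y => κ I y = κ I x)).card : ℝ)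
    have hS : (A.card : ℝ) * (A.card / (2 * q)) ≤ S := by
      have hS0 : 0 ≤ S := Finset.sum_nonneg fun _ _ => by positivity
      rw [← mul_div_assoc, div_le_iff₀ (by positivity)]
      nlinarith
    have h8 : (1:ℝ) + T * q ^ (d - 2) ≤ A.card / (4 * q) := by
      rw [le_div_iff₀ (by positivity)]
      have : 1 ≤ (T:ℝ) * q ^ (d - 2) := one_le_mul_of_one_le_of_one_le hTR hpow
      nlinarith
    have h9 : (A.card : ℝ) / (2 * q) = A.card / (4 * q) + A.card / (4 * q) := by
      field_simp; norm_num
    rw [h9] at hS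
    nlinarith
  refine le_trans (le_of_eq ?_) (Finset.sum_le_sum hI)
  simp only [Finset.sum_const, nsmul_eq_mul]
  ring

/-- independent sets of a relation -/
def Indep {V : Type*} (adj : V → V → Prop) (J : Finset V) : Prop :=
  ∀ x ∈ J, ∀ y ∈ J, y ≠ x → ¬ adj x y

lemma kleitman_winston {V : Type*} (adj : V → V → Prop) (A0 : Finset V) (s E : ℕ)
    (β lam : ℝ) (hlam : 0 ≤ lam) (hE : 1 ≤ E)
    (hdeg : ∀ A ⊆ A0, s ≤ A.card → 0 < A.card →
      ∃ x ∈ A, β * A.card ≤ ((A.filter (fun y => y ≠ x ∧ adj x y)).card : ℝ))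
    (hn : (A0.card + 1) * lam * Real.exp (-(β * E)) ≤ 1) :
    ∀ n : ℕ, ∀ A ⊆ A0, A.card = n → ∑ J ∈ A.powerset.filter (Indep adj), lam ^ J.card ≤
      (1 + lam) ^ s * ((n : ℝ) + 1) ^ E := by
  intro n
  induction n using Nat.strong_induction_on with
  | _ n ih =>
  intro A hA hAn
  by_cases hsmall : n < s ∨ n = 0
  · have hns : n ≤ s := by omega
    have h1 : ∑ J ∈ A.powerset.filter (Indep adj), lam ^ J.card ≤
        ∑ J ∈ A.powerset, lam ^ J.card :=
      Finset.sum_le_sum_of_subset_of_nonneg (Finset.filter_subset _ _)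
        (fun _ _ _ => by positivity)
    have h2 := Finset.sum_pow_mul_eq_add_pow lam 1 A
    simp only [one_pow, mul_one] at h2
    rw [h2, hAn, add_comm] at h1
    refine h1.trans ?_
    have h3 : (1 + lam) ^ n ≤ (1 + lam) ^ s := pow_le_pow_right₀ (by linarith) hns
    have h4 : (1:ℝ) ≤ ((n:ℝ) + 1) ^ E := one_le_pow₀ (by linarith [Nat.cast_nonneg (α := ℝ) n])
    have h5 : 0 ≤ (1 + lam) ^ s := by positivity
    nlinarith
  push Not at hsmall
  obtain ⟨v, hv, hdv⟩ := hdeg A hA (by omega) (by omega)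
  set N := A.filter (fun y => y ≠ v ∧ adj v y) with hN
  set A2 := (A.erase v) \ N with hA2
  have hNsub : N ⊆ A.erase v := by
    intro y hy
    rw [hN, Finset.mem_filter] at hy
    exact Finset.mem_erase.2 ⟨hy.2.1, hy.1⟩
  have hcard1 : (A.erase v).card = n - 1 := by rw [Finset.card_erase_of_mem hv, hAn]
  have hcard2 : A2.card + N.card = n - 1 := by
    rw [hA2, Finset.card_sdiff_of_subset hNsub, hcard1]
    have := Finset.card_le_card hNsub
    omega
  have ih1 := ih (n - 1) (by omega) (A.erase v) ((Finset.erase_subset _ _).trans hA) hcard1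
  have ih2 := ih A2.card (by omega) A2
    (Finset.sdiff_subset.trans ((Finset.erase_subset _ _).trans hA)) rfl
  have hsplit : ∑ J ∈ A.powerset.filter (Indep adj), lam ^ J.card ≤
      ∑ J ∈ (A.erase v).powerset.filter (Indep adj), lam ^ J.card +
      lam * ∑ J ∈ A2.powerset.filter (Indep adj), lam ^ J.card := by
    rw [← Finset.sum_filter_add_sum_filter_not (A.powerset.filter (Indep adj)) (fun J => v ∉ J)]
    refine add_le_add (le_of_eq ?_) ?_
    · refine Finset.sum_congr ?_ fun _ _ => rfl
      ext J
      simp only [Finset.mem_filter, Finset.mem_powerset, Finset.subset_erase]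
      tauto
    · rw [Finset.mul_sum]
      have : ∀ J ∈ (A.powerset.filter (Indep adj)).filter (fun J => ¬ v ∉ J),
          lam ^ J.card = lam * lam ^ (J.erase v).card := by
        intro J hJ
        simp only [Finset.mem_filter, not_not] at hJ
        rw [← pow_succ', Finset.card_erase_add_one hJ.2]
      rw [Finset.sum_congr rfl this]
      rw [← Finset.sum_image (f := fun J : Finset V => lam * lam ^ J.card)
        (g := fun J : Finset V => J.erase v)]
      · refine Finset.sum_le_sum_of_subset_of_nonneg ?_ (fun _ _ _ => by positivity)
        intro K hK
        simp only [Finset.mem_image, Finset.mem_filter, Finset.mem_powerset, not_not] at hK ⊢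
        obtain ⟨J, ⟨⟨hJA, hJi⟩, hvJ⟩, rfl⟩ := hK
        constructor
        · intro y hy
          rw [Finset.mem_erase] at hy
          rw [hA2, Finset.mem_sdiff, Finset.mem_erase, hN, Finset.mem_filter]
          exact ⟨⟨hy.1, hJA hy.2⟩, fun h => hJi v hvJ y hy.2 hy.1 h.2.2⟩
        · intro x hx y hy
          exact hJi x (Finset.mem_of_mem_erase hx) y (Finset.mem_of_mem_erase hy)
      · intro J hJ K hK hJK
        simp only [Finset.coe_filter, Finset.mem_filter, Set.mem_ofPred_eq, not_not] at hJ hK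
        have := congrArg (insert v) hJK
        simpa [Finset.insert_erase hJ.2, Finset.insert_erase hK.2] using this
  refine hsplit.trans ?_
  have hn1 : 1 ≤ n := by omega
  have hnR : (0:ℝ) < n := by exact_mod_cast hn1
  have e1 : ((n - 1 : ℕ) : ℝ) + 1 = n := by
    rw [Nat.cast_sub hn1]; simp
  rw [e1] at ih1
  have e2 : (A2.card : ℝ) + 1 ≤ ((n:ℝ) + 1) * Real.exp (-β) := by
    have h1 : (A2.card : ℝ) + N.card + 1 = n := by
      have : A2.card + N.card + 1 = n := by omega
      exact_mod_cast this
    rw [hAn] at hdv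
    have h2 := Real.add_one_le_exp (-β)
    have h3 : (n:ℝ) * (-β + 1) ≤ n * Real.exp (-β) := by gcongr
    have h4 := Real.exp_pos (-β)
    nlinarith
  have e3 : ((A2.card : ℝ) + 1) ^ E ≤ ((n:ℝ) + 1) ^ E * Real.exp (-(β * E)) := by
    refine (pow_le_pow_left₀ (by positivity) e2 E).trans (le_of_eq ?_)
    rw [mul_pow, ← Real.exp_nat_mul]
    congr 2; ring
  have hnA : (n:ℝ) ≤ A0.card := by
    rw [← hAn]; exact_mod_cast Finset.card_le_card hA
  have e4 : lam * Real.exp (-(β * E)) * (n + 1) ≤ 1 := by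
    refine le_trans ?_ hn
    have : 0 ≤ lam * Real.exp (-(β * E)) := by positivity
    nlinarith
  have e5 : (n:ℝ) ^ E * (n + 1) ≤ ((n:ℝ) + 1) ^ E * n := by
    obtain ⟨k, rfl⟩ : ∃ k, E = k + 1 := ⟨E - 1, by omega⟩
    rw [pow_succ, pow_succ]
    have : (n:ℝ) ^ k ≤ ((n:ℝ) + 1) ^ k := by gcongr; linarith
    have h6 : 0 ≤ (n:ℝ) * (n + 1) := by positivity
    nlinarith
  have e6 : (n:ℝ) ^ E + lam * (((n:ℝ) + 1) ^ E * Real.exp (-(β * E))) ≤ ((n:ℝ) + 1) ^ E := by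
    have h7 : 0 < (n:ℝ) + 1 := by positivity
    refine le_of_mul_le_mul_right ?_ h7
    have h8 : 0 ≤ ((n:ℝ) + 1) ^ E := by positivity
    nlinarith
  have hD : 0 ≤ (1 + lam) ^ s := by positivity
  calc _ ≤ (1 + lam) ^ s * (n:ℝ) ^ E + lam * ((1 + lam) ^ s *
        (((n:ℝ) + 1) ^ E * Real.exp (-(β * E)))) := by
        refine add_le_add ih1 (mul_le_mul_of_nonneg_left (ih2.trans ?_) hlam)
        exact mul_le_mul_of_nonneg_left e3 hD
    _ = (1 + lam) ^ s * ((n:ℝ) ^ E + lam * (((n:ℝ) + 1) ^ E * Real.exp (-(β * E)))) := by ring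
    _ ≤ _ := mul_le_mul_of_nonneg_left e6 hD

lemma sum_superset {V : Type*} [Fintype V] (p : ℝ) (U : Finset V) :
    ∑ S ∈ Finset.univ.filter (fun S : Finset V => U ⊆ S),
      p ^ S.card * (1 - p) ^ (Fintype.card V - S.card) = p ^ U.card := by
  have h := Finset.sum_pow_mul_eq_add_pow p (1 - p) Uᶜ
  simp only [add_sub_cancel, one_pow] at h
  calc _ = ∑ K ∈ Uᶜ.powerset, p ^ U.card * (p ^ K.card * (1 - p) ^ (Uᶜ.card - K.card)) := by
        symm
        refine Finset.sum_bij (fun K _ => U ∪ K) ?_ ?_ ?_ ?_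
        · intro K _; simp
        · intro K hK K' hK' hh
          rw [Finset.mem_powerset] at hK hK'
          have d1 : Disjoint U K := Finset.disjoint_left.2 fun x hx hxK => by
            simpa [hx] using hK hxK
          have d2 : Disjoint U K' := Finset.disjoint_left.2 fun x hx hxK => by
            simpa [hx] using hK' hxK
          rw [← Finset.union_sdiff_cancel_left d1, ← Finset.union_sdiff_cancel_left d2, hh]
        · intro S hS
          refine ⟨S \ U, ?_, ?_⟩
          · rw [Finset.mem_powerset]; intro x hx; simp at hx ⊢; exact hx.2
          · exact Finset.union_sdiff_of_subset (Finset.mem_filter.1 hS).2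
        · intro K hK
          rw [Finset.mem_powerset] at hK
          have d1 : Disjoint U K := Finset.disjoint_left.2 fun x hx hxK => by
            simpa [hx] using hK hxK
          rw [Finset.card_union_of_disjoint d1, Finset.card_compl, pow_add, mul_assoc,
            Nat.sub_sub]
    _ = _ := by rw [← Finset.mul_sum, h, mul_one]

lemma prob_le {V : Type*} [Fintype V] (p : ℝ) (hp0 : 0 ≤ p) (hp1 : p ≤ 1)
    (E : Finset V → Prop) (𝒰 : Finset (Finset V)) (m : ℕ) (hm : ∀ U ∈ 𝒰, U.card = m)
    (hE : ∀ S, E S → ∃ U ∈ 𝒰, U ⊆ S) : bernoulliProb V p E ≤ 𝒰.card * p ^ m := by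
  have hw : ∀ S : Finset V, 0 ≤ p ^ S.card * (1 - p) ^ (Fintype.card V - S.card) := fun S => by
    have : 0 ≤ 1 - p := by linarith
    positivity
  have h1 : (𝒰.card : ℝ) * p ^ m = ∑ U ∈ 𝒰, ∑ S : Finset V,
      if U ⊆ S then p ^ S.card * (1 - p) ^ (Fintype.card V - S.card) else 0 := by
    rw [← nsmul_eq_mul, ← Finset.sum_const]
    refine Finset.sum_congr rfl fun U hU => ?_
    rw [← Finset.sum_filter, sum_superset, hm U hU]
  rw [h1, Finset.sum_comm, bernoulliProb]
  refine Finset.sum_le_sum fun S _ => ?_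
  have hnn : ∀ U ∈ 𝒰, 0 ≤ if U ⊆ S then p ^ S.card * (1 - p) ^ (Fintype.card V - S.card) else 0 :=
    fun U _ => by split_ifs <;> simp [hw S]
  split_ifs with hES
  · obtain ⟨U, hU, hUS⟩ := hE S hES
    refine le_trans ?_ (Finset.single_le_sum hnn hU)
    simp [hUS]
  · exact Finset.sum_nonneg hnn

lemma count_gp (hd : 2 ≤ d) (t j T E : ℕ) (hT1 : 1 ≤ T) (hT : T ≤ t.choose (d - 1))
    (hE : 1 ≤ E) (lam : ℝ) (hlam : 0 ≤ lam)
    (hn : ((Fintype.card F : ℝ) ^ d + 1) * lam *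
      Real.exp (-((T : ℝ) / (4 * Fintype.card F) * E)) ≤ 1) :
    (((Finset.univ : Finset (Finset (Fin d → F))).filter
      (fun P => P.card = t + j ∧ GPF P)).card : ℝ) * lam ^ j ≤
      ((Fintype.card F : ℝ) ^ d) ^ t * ((1 + lam) ^ (16 * T * Fintype.card F ^ (d - 1)) *
        ((Fintype.card F : ℝ) ^ d + 1) ^ E) := by
  set q := Fintype.card F with hq
  have hV : Fintype.card (Fin d → F) = q ^ d := by simp [hq]
  have hex : ∀ I : Finset (Fin d → F), ∃ h : Option F → (Fin d → F) × F, I.card = d - 1 →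
      (∀ k, h k ≠ 0) ∧ (∀ k, ∀ z ∈ I, ev (h k) z = 0) ∧ ∀ x, ∃ k, ev (h k) x = 0 := by
    intro I
    by_cases hI : I.card = d - 1
    · obtain ⟨h, hh⟩ := exists_pencil hd I hI
      exact ⟨h, fun _ => hh⟩
    · exact ⟨fun _ => 0, fun h => absurd h hI⟩
  choose h hh using hex
  have hexκ : ∀ (I : Finset (Fin d → F)) (x : Fin d → F), ∃ k, I.card = d - 1 →
      ev (h I k) x = 0 := by
    intro I x
    by_cases hI : I.card = d - 1
    · obtain ⟨k, hk⟩ := (hh I hI).2.2 x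
      exact ⟨k, fun _ => hk⟩
    · exact ⟨none, fun h => absurd h hI⟩
  choose κ hκ using hexκ
  have hexC : ∀ R : Finset (Fin d → F), ∃ C : Finset (Finset (Fin d → F)), R.card = t →
      C ⊆ R.powersetCard (d - 1) ∧ C.card = T := by
    intro R
    by_cases hR : R.card = t
    · obtain ⟨C, hC⟩ := Finset.exists_subset_card_eq (s := R.powersetCard (d - 1)) (n := T)
        (by rw [Finset.card_powersetCard, hR]; exact hT)
      exact ⟨C, fun _ => hC⟩
    · exact ⟨∅, fun h => absurd h hR⟩
  choose C hC using hexC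
  let adj : Finset (Fin d → F) → (Fin d → F) → (Fin d → F) → Prop :=
    fun R x y => ∃ I ∈ C R, κ I y = κ I x
  let A0 : Finset (Fin d → F) → Finset (Fin d → F) := fun R =>
    Finset.univ.filter (fun x => x ∉ R ∧ GPF (insert x R))
  have hA0 : ∀ R, ((A0 R).card : ℝ) ≤ (q:ℝ) ^ d := by
    intro R
    have := Finset.card_le_univ (A0 R)
    rw [hV] at this
    exact_mod_cast this
  have hZ : ∀ R, R.card = t →
      (((A0 R).powerset.filter (fun J => Indep (adj R) J ∧ J.card = j)).card : ℝ) * lam ^ j ≤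
      (1 + lam) ^ (16 * T * q ^ (d - 1)) * ((q : ℝ) ^ d + 1) ^ E := by
    intro R hR
    obtain ⟨hC1, hC2⟩ := hC R hR
    have hCC : ∀ I ∈ C R, I ⊆ R ∧ I.card = d - 1 := fun I hI => by
      simpa [Finset.mem_powersetCard] using hC1 hI
    have kw := kleitman_winston (adj R) (A0 R) (16 * T * q ^ (d - 1)) E
      ((T : ℝ) / (4 * q)) lam hlam hE (by
        intro A hA hs _
        have := supersat hd h κ (fun I hI => (hh I hI).1) (fun I hI => (hh I hI).2.1)
          (fun I hI x => hκ I x hI) R (C R) hCC (by omega) A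
          (fun x hx => (Finset.mem_filter.1 (hA hx)).2) (by rw [hC2]; exact hs)
        rw [hC2] at this
        obtain ⟨x, hx, hx'⟩ := this
        refine ⟨x, hx, hx'.trans (le_of_eq ?_)⟩
        congr 2
        ext y
        simp [adj]) (by
        refine le_trans ?_ hn
        have := hA0 R
        gcongr) _ (A0 R) subset_rfl rfl
    have h1 : (((A0 R).powerset.filter (fun J => Indep (adj R) J ∧ J.card = j)).card : ℝ) * lam ^ j
        ≤ ∑ J ∈ (A0 R).powerset.filter (Indep (adj R)), lam ^ J.card := by
      rw [← nsmul_eq_mul, ← Finset.sum_const]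
      rw [Finset.sum_congr rfl (g := fun J : Finset (Fin d → F) => lam ^ J.card)]
      · refine Finset.sum_le_sum_of_subset_of_nonneg ?_ (fun _ _ _ => by positivity)
        intro J hJ
        simp only [Finset.mem_filter] at hJ ⊢
        exact ⟨hJ.1, hJ.2.1⟩
      · intro J hJ
        rw [(Finset.mem_filter.1 hJ).2.2]
    refine h1.trans (kw.trans ?_)
    have := hA0 R
    gcongr
  have hcov : (Finset.univ : Finset (Finset (Fin d → F))).filter
      (fun P => P.card = t + j ∧ GPF P) ⊆
      ((Finset.univ : Finset (Fin d → F)).powersetCard t).biUnion (fun R =>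
        ((A0 R).powerset.filter (fun J => Indep (adj R) J ∧ J.card = j)).image
          (fun J => R ∪ J)) := by
    intro P hP
    obtain ⟨hPc, hPG⟩ := (Finset.mem_filter.1 hP).2
    obtain ⟨R, hRP, hR⟩ := Finset.exists_subset_card_eq (s := P) (n := t) (by omega)
    obtain ⟨hC1, hC2⟩ := hC R hR
    rw [Finset.mem_biUnion]
    refine ⟨R, by simp [Finset.mem_powersetCard, hR], ?_⟩
    rw [Finset.mem_image]
    refine ⟨P \ R, ?_, Finset.union_sdiff_of_subset hRP⟩
    rw [Finset.mem_filter, Finset.mem_powerset]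
    refine ⟨?_, ?_, ?_⟩
    · intro x hx
      rw [Finset.mem_sdiff] at hx
      exact Finset.mem_filter.2 ⟨Finset.mem_univ _, hx.2,
        hPG.mono (Finset.insert_subset hx.1 hRP)⟩
    · rintro x hx y hy hyx ⟨I, hI, hIxy⟩
      rw [Finset.mem_sdiff] at hx hy
      have hI' := hC1 hI
      rw [Finset.mem_powersetCard] at hI'
      have h1 := hPG (h I (κ I x)) ((hh I hI'.2).1 _)
      have hsub : insert y (insert x I) ⊆ P.filter (fun z => ev (h I (κ I x)) z = 0) := by
        intro z hz
        simp only [Finset.mem_insert] at hz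
        rw [Finset.mem_filter]
        rcases hz with rfl | rfl | hz
        · exact ⟨hy.1, by rw [← hIxy]; exact hκ I z hI'.2⟩
        · exact ⟨hx.1, hκ I z hI'.2⟩
        · exact ⟨hRP (hI'.1 hz), (hh I hI'.2).2.1 _ z hz⟩
      have h2 := Finset.card_le_card hsub
      rw [Finset.card_insert_of_notMem, Finset.card_insert_of_notMem, hI'.2] at h2
      · omega
      · exact fun hm => hx.2 (hI'.1 hm)
      · rw [Finset.mem_insert]
        rintro (hm | hm)
        · exact hyx hm
        · exact hy.2 (hI'.1 hm)
    · rw [Finset.card_sdiff_of_subset hRP]; omega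
  have hcard := (Finset.card_le_card hcov).trans Finset.card_biUnion_le
  have hcard2 : (((Finset.univ : Finset (Finset (Fin d → F))).filter
      (fun P => P.card = t + j ∧ GPF P)).card : ℝ) ≤
      ∑ R ∈ (Finset.univ : Finset (Fin d → F)).powersetCard t,
      (((A0 R).powerset.filter (fun J => Indep (adj R) J ∧ J.card = j)).card : ℝ) := by
    have := hcard.trans (Finset.sum_le_sum fun R _ => Finset.card_image_le)
    exact_mod_cast this
  refine (mul_le_mul_of_nonneg_right hcard2 (by positivity)).trans ?_
  rw [Finset.sum_mul]
  refine (Finset.sum_le_sum fun R hR => hZ R (Finset.mem_powersetCard.1 hR).2).trans ?_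
  rw [Finset.sum_const, nsmul_eq_mul, Finset.card_powersetCard, Finset.card_univ, hV]
  refine mul_le_mul_of_nonneg_right ?_ (by positivity)
  exact_mod_cast Nat.choose_le_pow (q ^ d) t

set_option maxHeartbeats 2000000 in
lemma step (hd : 2 ≤ d) (K c L X p : ℝ) (hK : K = 8 * (d + 1))
    (hc : c = 8 * K * (d * 2 ^ (2 * d + 4)))
    (q : ℕ) (hq : Fintype.card F = q) (hL : (q : ℝ) = (2:ℝ) ^ L) (hL8 : 8 * (d:ℝ) ≤ L)
    (Y : ℝ) (hY : Y ^ d = q) (hY1 : 1 ≤ Y) (hX1 : Y * L ^ 2 ≤ X) (hX2 : 2 * c * X ≤ q)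
    (hp0 : 0 ≤ p) (hp1 : p ≤ 1) (hpX : p * (q:ℝ) ^ d * L ^ 2 ≤ X ^ 2) :
    bernoulliProb (Fin d → F) p
      (fun S => ∃ T : Finset (Fin d → F), T ⊆ S ∧ IsGenPos F d ↑T ∧ c * X ≤ (T.card : ℝ))
      ≤ (1 / 2) ^ ⌈c * X⌉₊ := by
  have hdR : (2:ℝ) ≤ d := by exact_mod_cast hd
  have hK24 : 24 ≤ K := by rw [hK]; linarith
  have hpw : (1:ℝ) ≤ 2 ^ (2 * d + 4) := one_le_pow₀ (by norm_num)
  have hc8 : 8 * K * d ≤ c := by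
    rw [hc]
    have : 0 ≤ 8 * K * d := by positivity
    nlinarith
  have hc1 : 1 ≤ c := by nlinarith
  have hL16 : 16 ≤ L := by linarith
  have hLL : L ≤ L ^ 2 := by nlinarith
  have hX0 : L ^ 2 ≤ X := by nlinarith
  have hX16 : 16 ≤ X := by linarith
  set m := ⌈c * X⌉₊ with hm
  have hcX : X ≤ c * X := by nlinarith
  have hm1 : c * X ≤ m := Nat.le_ceil _
  have hm2 : (m:ℝ) ≤ 2 * c * X := by
    have := Nat.ceil_lt_add_one (show 0 ≤ c * X by linarith)
    rw [← hm] at this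
    linarith
  have hmq : (m:ℝ) ≤ q := hm2.trans hX2
  have hm0 : (0:ℝ) < m := by linarith
  have hL0 : 0 < L := by linarith
  have hq0 : (0:ℝ) < q := by linarith
  have hq1 : (2:ℝ) ≤ q := by linarith
  have hmL : c * L ≤ m / L := by
    rw [le_div_iff₀ hL0]
    have : c * L * L ≤ c * X := by nlinarith
    linarith
  have hcd : 2 * (d:ℝ) ≤ c := by nlinarith
  have hmL4 : 4 * (d:ℝ) ≤ m / L := by
    have := mul_le_mul hcd (show 2 ≤ L by linarith) (by norm_num) (by linarith)
    linarith
  set t := ⌊(m:ℝ) / L⌋₊ with ht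
  have ht1 : (t:ℝ) ≤ m / L := Nat.floor_le (by positivity)
  have ht1' : (t:ℝ) * L ≤ m := by rwa [le_div_iff₀ hL0] at ht1
  have ht2 : (m:ℝ) / L < t + 1 := Nat.lt_floor_add_one _
  have ht3 : (m:ℝ) / L ≤ 2 * t := by linarith
  have ht3' : (m:ℝ) ≤ 2 * t * L := by rwa [div_le_iff₀ hL0] at ht3
  have ht4 : 2 * (d:ℝ) ≤ t := by linarith
  have ht4' : 2 * d ≤ t := by exact_mod_cast ht4
  have ht5 : 2 * t ≤ m := by
    have : (t:ℝ) * 2 ≤ t * L := mul_le_mul_of_nonneg_left (by linarith) (by positivity)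
    have : 2 * (t:ℝ) ≤ m := by linarith
    exact_mod_cast this
  obtain ⟨j, hj⟩ : ∃ j, m = t + j := ⟨m - t, by omega⟩
  have hj2 : m ≤ 2 * j := by omega
  have hj2R : (m:ℝ) ≤ 2 * j := by exact_mod_cast hj2
  have hjm : (j:ℝ) ≤ m := by exact_mod_cast (by omega : j ≤ m)
  have hj0 : (0:ℝ) < j := by linarith
  set T := ⌈K * q * L ^ 2 / m⌉₊ with hT
  have hT1 : K * q * L ^ 2 / m ≤ T := Nat.le_ceil _
  have hT0 : 1 ≤ K * q * L ^ 2 / m := by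
    rw [le_div_iff₀ hm0]
    have h1 : 1 ≤ K * L ^ 2 := one_le_mul_of_one_le_of_one_le (by linarith) (by linarith)
    have h2 := mul_le_mul_of_nonneg_right h1 hq0.le
    linarith
  have hT2 : (T:ℝ) ≤ 2 * K * q * L ^ 2 / m := by
    have := Nat.ceil_lt_add_one (show 0 ≤ K * q * L ^ 2 / m by positivity)
    rw [← hT] at this
    have e : 2 * K * q * L ^ 2 / m = 2 * (K * q * L ^ 2 / m) := by ring
    rw [e]
    linarith
  have hT1n : 1 ≤ T := by
    have : (1:ℝ) ≤ T := by linarith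
    exact_mod_cast this
  have hTR : (1:ℝ) ≤ T := by exact_mod_cast hT1n
  -- (i)
  have hchoose : T ≤ t.choose (d - 1) := by
    have h1 := Nat.pow_le_choose (α := ℝ) (d - 1) t
    have h2 : ((t + 1 - (d - 1) : ℕ) : ℝ) ≥ m / (4 * L) := by
      have : (t:ℝ) ≤ 2 * ((t + 1 - (d - 1) : ℕ) : ℝ) := by
        exact_mod_cast (by omega : t ≤ 2 * (t + 1 - (d - 1)))
      rw [ge_iff_le, div_le_iff₀ (by positivity)]
      have := mul_le_mul_of_nonneg_right this hL0.le
      linarith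
    have h3 : ((d - 1).factorial : ℝ) ≤ (d:ℝ) ^ (d - 1) := by
      have h := (Nat.factorial_le_pow (d - 1)).trans
        (Nat.pow_le_pow_left (Nat.sub_le d 1) (d - 1))
      exact_mod_cast h
    have h4 : ((m:ℝ) / (4 * L)) ^ (d - 1) / (d:ℝ) ^ (d - 1) ≤ (t.choose (d - 1) : ℝ) := by
      refine le_trans ?_ h1
      gcongr
    have h5 : 2 * K * q * L ^ 2 / m ≤ ((m:ℝ) / (4 * L)) ^ (d - 1) / (d:ℝ) ^ (d - 1) := by
      rw [← div_pow, div_div, div_pow, div_le_div_iff₀ hm0 (by positivity), ← pow_succ,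
        show d - 1 + 1 = d by omega]
      have a1 : (c * (Y * L ^ 2)) ^ d ≤ (m:ℝ) ^ d := by
        refine pow_le_pow_left₀ (by positivity) ?_ d
        exact (mul_le_mul_of_nonneg_left hX1 (by linarith)).trans hm1
      refine le_trans ?_ a1
      rw [mul_pow c, mul_pow Y, hY]
      have a2 : 2 * K * (4 * d) ^ (d - 1) ≤ c ^ d := by
        obtain ⟨k, rfl⟩ : ∃ k, d = k + 1 := ⟨d - 1, by omega⟩
        rw [Nat.add_sub_cancel, pow_succ']
        have b0 := mul_le_mul_of_nonneg_left hdR (show 0 ≤ 8 * K by linarith)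
        have b3 := mul_le_mul_of_nonneg_right hK24 (show 0 ≤ (((k + 1 : ℕ):ℝ)) by positivity)
        have b1 : 2 * K ≤ c := by linarith
        have b2 : 4 * ((k + 1 : ℕ):ℝ) ≤ c := by linarith
        gcongr
      have a3 : L ^ 2 * L ^ (d - 1) ≤ (L ^ 2) ^ d := by
        rw [← pow_add, ← pow_mul]
        exact pow_le_pow_right₀ (by linarith) (by omega)
      calc 2 * K * q * L ^ 2 * (4 * L * d) ^ (d - 1)
          = (2 * K * (4 * d) ^ (d - 1)) * (q * (L ^ 2 * L ^ (d - 1))) := by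
            rw [show 4 * L * (d:ℝ) = (4 * d) * L by ring, mul_pow]; ring
        _ ≤ c ^ d * (q * (L ^ 2) ^ d) := by gcongr
    have h6 : (T:ℝ) ≤ (t.choose (d - 1) : ℝ) := hT2.trans (h5.trans h4)
    exact_mod_cast h6
  set s : ℕ := 16 * T * q ^ (d - 1) with hs
  have hsR : (s:ℝ) = 16 * T * (q:ℝ) ^ (d - 1) := by rw [hs]; push_cast; ring
  have hqd1 : (q:ℝ) ≤ (q:ℝ) ^ (d - 1) := by
    calc (q:ℝ) = (q:ℝ) ^ 1 := by ring
      _ ≤ _ := pow_le_pow_right₀ (by linarith) (by omega)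
  have hsq : (q:ℝ) ≤ s := by
    rw [hsR]
    have : (1:ℝ) * q ≤ (16 * T) * (q:ℝ) ^ (d - 1) := by gcongr; linarith
    linarith
  have hs0 : (0:ℝ) < s := by linarith
  set lam : ℝ := j / s with hlam
  have hlam0 : 0 < lam := by positivity
  have hlam1 : lam ≤ 1 := by
    rw [hlam, div_le_one hs0]; linarith
  have hqd : (1:ℝ) ≤ (q:ℝ) ^ d := one_le_pow₀ (by linarith)
  have hqd2 : (q:ℝ) ^ d + 1 ≤ (q:ℝ) ^ (d + 1) := by
    rw [pow_succ]
    have := mul_le_mul_of_nonneg_left hq1 (show 0 ≤ (q:ℝ) ^ d by positivity)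
    linarith
  have hexp : Real.exp (-((T : ℝ) / (4 * q) * t)) ≤ ((q:ℝ) ^ (d + 1))⁻¹ := by
    have h1 : (d + 1) * L ≤ (T : ℝ) / (4 * q) * t := by
      rw [div_mul_eq_mul_div, le_div_iff₀ (by positivity)]
      have h2 : K * q * L ^ 2 ≤ T * m := by rwa [div_le_iff₀ hm0] at hT1
      have h3 : (T:ℝ) * m ≤ T * (2 * t * L) := by gcongr
      have h4 : K * q * L * L ≤ (2 * (T * t)) * L := by
        calc K * q * L * L = K * q * L ^ 2 := by ring
          _ ≤ T * (2 * t * L) := h2.trans h3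
          _ = _ := by ring
      have h5 := le_of_mul_le_mul_right h4 hL0
      rw [hK] at h5
      linarith
    rw [Real.exp_neg]
    apply inv_anti₀ (by positivity)
    have h6 : (q:ℝ) ≤ Real.exp L := by
      rw [hL, Real.rpow_def_of_pos (by norm_num)]
      apply Real.exp_le_exp.2
      have h7 : Real.log 2 ≤ 1 := by linarith [Real.log_two_lt_d9]
      have h8 := mul_le_mul_of_nonneg_right h7 hL0.le
      linarith
    calc (q:ℝ) ^ (d + 1) ≤ (Real.exp L) ^ (d + 1) := by gcongr
      _ = Real.exp ((d + 1) * L) := by rw [← Real.exp_nat_mul]; push_cast; rfl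
      _ ≤ _ := Real.exp_le_exp.2 h1
  have hcount := count_gp (F := F) hd t j T t hT1n hchoose (by omega) lam hlam0.le (by
    rw [hq]
    calc ((q:ℝ) ^ d + 1) * lam * Real.exp (-((T : ℝ) / (4 * q) * t))
        ≤ (q:ℝ) ^ (d + 1) * 1 * ((q:ℝ) ^ (d + 1))⁻¹ := by gcongr
      _ = 1 := by rw [mul_one, mul_inv_cancel₀ (by positivity)])
  rw [hq, ← hs] at hcount
  refine (prob_le p hp0 hp1 _ ((Finset.univ : Finset (Finset (Fin d → F))).filter
      (fun P => P.card = t + j ∧ GPF P)) m ?_ ?_).trans ?_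
  · intro U hU
    rw [(Finset.mem_filter.1 hU).2.1, hj]
  · rintro S ⟨P, hPS, hPG, hPc⟩
    have : m ≤ P.card := Nat.ceil_le.2 hPc
    obtain ⟨U, hUP, hU⟩ := Finset.exists_subset_card_eq this
    exact ⟨U, Finset.mem_filter.2 ⟨Finset.mem_univ _, by omega,
      (gpf_of_isGenPos P hPG).mono hUP⟩, hUP.trans hPS⟩
  set N : ℝ := (((Finset.univ : Finset (Finset (Fin d → F))).filter
      (fun P => P.card = t + j ∧ GPF P)).card : ℝ) with hN
  have hN0 : 0 ≤ N := by rw [hN]; exact Nat.cast_nonneg _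
  clear_value N
  have hqt : (q:ℝ) ^ t ≤ 2 ^ m := by
    rw [hL, ← Real.rpow_natCast, ← Real.rpow_natCast, ← Real.rpow_mul (by norm_num)]
    apply Real.rpow_le_rpow_of_exponent_le (by norm_num)
    linarith
  have f1 : ((q:ℝ) ^ d) ^ t ≤ ((2:ℝ) ^ m) ^ d := by
    rw [← pow_mul, mul_comm, pow_mul]
    gcongr
  have f2 : ((q:ℝ) ^ d + 1) ^ t ≤ ((2:ℝ) ^ m) ^ (d + 1) := by
    calc ((q:ℝ) ^ d + 1) ^ t ≤ ((q:ℝ) ^ (d + 1)) ^ t := by gcongr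
      _ = ((q:ℝ) ^ t) ^ (d + 1) := by rw [← pow_mul, mul_comm, pow_mul]
      _ ≤ _ := by gcongr
  have f3 : (1 + lam) ^ s ≤ ((2:ℝ) ^ m) ^ 2 := by
    have g1 : 1 + lam ≤ Real.exp lam := by linarith [Real.add_one_le_exp lam]
    calc (1 + lam) ^ s ≤ (Real.exp lam) ^ s := by gcongr
      _ = Real.exp 1 ^ j := by
        rw [← Real.exp_nat_mul, ← Real.exp_nat_mul]
        congr 1
        rw [hlam]; field_simp
      _ ≤ 4 ^ j := by
        gcongr
        linarith [Real.exp_one_lt_d9]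
      _ ≤ 4 ^ m := pow_le_pow_right₀ (by norm_num) (by omega)
      _ = ((2:ℝ) ^ m) ^ 2 := by rw [← pow_mul, mul_comm, pow_mul]; norm_num
  have f4 : p / lam ≤ ((1:ℝ) / 4) ^ (2 * d + 4) := by
    rw [hlam, div_div_eq_mul_div, div_le_iff₀ hj0, hsR]
    have g1 : (T:ℝ) * m ≤ 2 * K * q * L ^ 2 := by rwa [le_div_iff₀ hm0] at hT2
    have g2 : (q:ℝ) ^ d = q ^ (d - 1) * q := by
      rw [← pow_succ]; congr 1; omega
    have g3 : p * (16 * T * (q:ℝ) ^ (d - 1)) * m ≤ 32 * K * X ^ 2 := by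
      calc p * (16 * T * (q:ℝ) ^ (d - 1)) * m = 16 * p * (q:ℝ) ^ (d - 1) * (T * m) := by ring
        _ ≤ 16 * p * (q:ℝ) ^ (d - 1) * (2 * K * q * L ^ 2) := by gcongr
        _ = 32 * K * (p * (q:ℝ) ^ d * L ^ 2) := by rw [g2]; ring
        _ ≤ _ := by gcongr
    have g4 : 64 * K * X ^ 2 ≤ ((1:ℝ) / 4) ^ (2 * d + 4) * (m * m) := by
      have g5 : (c * X) * (c * X) ≤ (m:ℝ) * m := by
        have : 0 ≤ c * X := by linarith
        gcongr
      have g6 : ((1:ℝ) / 4) ^ (2 * d + 4) * (c * c) = 64 * K * K * d * d := by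
        have : ((1:ℝ) / 4) ^ (2 * d + 4) * (2 ^ (2 * d + 4) * 2 ^ (2 * d + 4)) = 1 := by
          rw [← mul_pow, ← mul_pow]; norm_num
        rw [hc]
        linear_combination (64 * K * K * d * d) * this
      have g7 : 64 * K ≤ 64 * K * K * d * d := by
        have h1 : 1 ≤ (d:ℝ) * d := one_le_mul_of_one_le_of_one_le (by linarith) (by linarith)
        have h2 : 1 ≤ K * (d * d) := one_le_mul_of_one_le_of_one_le (by linarith) h1
        have h3 := mul_le_mul_of_nonneg_left h2 (show 0 ≤ 64 * K by linarith)
        linarith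
      calc 64 * K * X ^ 2 ≤ (64 * K * K * d * d) * X ^ 2 := by gcongr
        _ = ((1:ℝ) / 4) ^ (2 * d + 4) * ((c * X) * (c * X)) := by rw [← g6]; ring
        _ ≤ _ := by gcongr
    have g8 : ((1:ℝ) / 4) ^ (2 * d + 4) * (m * m) ≤ ((1:ℝ) / 4) ^ (2 * d + 4) * (m * (2 * j)) := by
      gcongr
    have g9 : p * (16 * T * (q:ℝ) ^ (d - 1)) * m ≤ (((1:ℝ) / 4) ^ (2 * d + 4) * j) * m := by
      linarith
    exact le_of_mul_le_mul_right g9 hm0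
  have f5 : (p / lam) ^ j ≤ ((1 / 2 : ℝ) ^ m) ^ (2 * d + 4) := by
    calc (p / lam) ^ j ≤ (((1:ℝ) / 4) ^ (2 * d + 4)) ^ j := by gcongr
      _ = ((1 / 2 : ℝ) ^ (2 * j)) ^ (2 * d + 4) := by
        rw [← pow_mul, mul_comm, pow_mul, pow_mul]; norm_num
      _ ≤ _ := by
        gcongr ?_ ^ _
        exact pow_le_pow_of_le_one (by norm_num) (by norm_num) hj2
  calc N * p ^ m ≤ N * p ^ j := by
        gcongr ?_ * ?_
        exact pow_le_pow_of_le_one hp0 hp1 (by omega)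
    _ = (N * lam ^ j) * (p / lam) ^ j := by
        rw [mul_assoc, ← mul_pow, mul_div_cancel₀ _ hlam0.ne']
    _ ≤ (((2:ℝ) ^ m) ^ d * (((2:ℝ) ^ m) ^ 2 * ((2:ℝ) ^ m) ^ (d + 1))) *
        ((1 / 2 : ℝ) ^ m) ^ (2 * d + 4) := by
        refine mul_le_mul (hcount.trans ?_) f5 (by positivity) (by positivity)
        gcongr
    _ = (1 / 2) ^ m := by
        have : (2:ℝ) ^ m * (1 / 2 : ℝ) ^ m = 1 := by rw [← mul_pow]; norm_num
        calc _ = ((2:ℝ) ^ m * (1 / 2 : ℝ) ^ m) ^ (2 * d + 3) * (1 / 2) ^ m := by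
              rw [mul_pow]; ring
          _ = _ := by rw [this]; simp

lemma core (hd : 2 ≤ d) : ∃ c : ℝ, 0 < c ∧ ∀ δ : ℝ, 0 < δ → ∃ Q : ℕ, 2 ≤ Q ∧ ∀ q : ℕ, Q ≤ q →
      ∀ (F : Type) [Field F] [Fintype F], Fintype.card F = q →
        ∀ p X : ℝ, 0 ≤ p → p ≤ 1 →
          (q : ℝ) ^ ((1 : ℝ) / (d : ℝ)) * (Real.logb 2 q) ^ 2 ≤ X →
          X ≤ (q : ℝ) ^ ((d : ℝ) / ((d : ℝ) + 1)) * (Real.logb 2 q) ^ 2 →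
          p * (q : ℝ) ^ d * (Real.logb 2 q) ^ 2 ≤ X ^ 2 →
            bernoulliProb (Fin d → F) p
              (fun S => ∃ T : Finset (Fin d → F), T ⊆ S ∧ IsGenPos F d ↑T ∧
                c * X ≤ (T.card : ℝ)) ≤ δ := by
  have hdR : (2:ℝ) ≤ d := by exact_mod_cast hd
  obtain ⟨K, hK⟩ : ∃ K : ℝ, K = 8 * (d + 1) := ⟨_, rfl⟩
  obtain ⟨c, hc⟩ : ∃ c : ℝ, c = 8 * K * (d * 2 ^ (2 * d + 4)) := ⟨_, rfl⟩
  have hc0 : 0 < c := by rw [hc, hK]; positivity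
  refine ⟨c, hc0, fun δ hδ => ?_⟩
  have e1 : ∀ᶠ q : ℕ in Filter.atTop, 8 * (d:ℝ) ≤ Real.logb 2 q :=
    ((Real.tendsto_logb_atTop (by norm_num)).comp tendsto_natCast_atTop_atTop).eventually_ge_atTop _
  have e2 : ∀ᶠ q : ℕ in Filter.atTop,
      2 * c * ((q : ℝ) ^ ((d : ℝ) / ((d : ℝ) + 1)) * (Real.logb 2 q) ^ 2) ≤ q := by
    have hr : (0:ℝ) < 1 / (2 * (d + 1)) := by positivity
    have hlog2 : 0 < Real.log 2 := Real.log_pos (by norm_num)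
    have h1 := (isLittleO_log_rpow_atTop hr).bound
      (show 0 < Real.log 2 / (2 * c + 1) by positivity)
    have h2 := tendsto_natCast_atTop_atTop (R := ℝ) |>.eventually h1
    filter_upwards [h2, Filter.eventually_ge_atTop 2] with q hq hq2
    have hqR : (2:ℝ) ≤ q := by exact_mod_cast hq2
    have hq0 : (0:ℝ) < q := by linarith
    have hl : 0 ≤ Real.log q := Real.log_nonneg (by linarith)
    rw [Real.norm_of_nonneg hl, Real.norm_of_nonneg (by positivity)] at hq
    have hlb : Real.logb 2 q ≤ (q:ℝ) ^ ((1:ℝ) / (2 * (d + 1))) / (2 * c + 1) := by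
      rw [Real.logb, div_le_iff₀ hlog2]
      refine hq.trans (le_of_eq ?_)
      ring
    have hlb0 : 0 ≤ Real.logb 2 q := div_nonneg hl hlog2.le
    have h3 : Real.logb 2 q ^ 2 ≤ (q:ℝ) ^ ((1:ℝ) / (d + 1)) / (2 * c + 1) ^ 2 := by
      refine (pow_le_pow_left₀ hlb0 hlb 2).trans (le_of_eq ?_)
      rw [div_pow, ← Real.rpow_natCast, ← Real.rpow_mul hq0.le]
      congr 2
      push_cast
      field_simp
    have h4 : (q:ℝ) ^ ((d : ℝ) / ((d : ℝ) + 1)) * (q:ℝ) ^ ((1:ℝ) / (d + 1)) = q := by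
      rw [← Real.rpow_add hq0, ← add_div, div_self (by positivity), Real.rpow_one]
    calc 2 * c * ((q : ℝ) ^ ((d : ℝ) / ((d : ℝ) + 1)) * (Real.logb 2 q) ^ 2)
        ≤ 2 * c * ((q : ℝ) ^ ((d : ℝ) / ((d : ℝ) + 1)) *
          ((q:ℝ) ^ ((1:ℝ) / (d + 1)) / (2 * c + 1) ^ 2)) := by gcongr
      _ = 2 * c / (2 * c + 1) ^ 2 * ((q : ℝ) ^ ((d : ℝ) / ((d : ℝ) + 1)) *
          (q:ℝ) ^ ((1:ℝ) / (d + 1))) := by ring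
      _ = 2 * c / (2 * c + 1) ^ 2 * q := by rw [h4]
      _ ≤ 1 * q := by
        gcongr
        rw [div_le_one (by positivity)]
        nlinarith
      _ = q := one_mul _
  obtain ⟨M, hM⟩ := exists_pow_lt_of_lt_one hδ (show (1/2:ℝ) < 1 by norm_num)
  have e3 : ∀ᶠ q : ℕ in Filter.atTop, (M:ℝ) ≤ Real.logb 2 q :=
    ((Real.tendsto_logb_atTop (by norm_num)).comp tendsto_natCast_atTop_atTop).eventually_ge_atTop _
  obtain ⟨Q, hQ⟩ := Filter.eventually_atTop.1 (e1.and (e2.and e3))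
  refine ⟨max Q 2, le_max_right _ _, fun q hq F _ _ hF p X hp0 hp1 hX1 hX2 hpX => ?_⟩
  obtain ⟨h1, h2, h3⟩ := hQ q ((le_max_left _ _).trans hq)
  have hqR : (2:ℝ) ≤ q := by exact_mod_cast (le_max_right _ _).trans hq
  have hq0 : (0:ℝ) < q := by linarith
  have hY1 : 1 ≤ (q : ℝ) ^ ((1 : ℝ) / (d : ℝ)) :=
    Real.one_le_rpow (by linarith) (by positivity)
  have hst := step (F := F) hd K c (Real.logb 2 q) X p hK hc q hF
    (Real.rpow_logb (by norm_num) (by norm_num) hq0).symm h1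
    ((q : ℝ) ^ ((1 : ℝ) / (d : ℝ))) (by
      rw [← Real.rpow_natCast, ← Real.rpow_mul hq0.le, one_div_mul_cancel (by positivity),
        Real.rpow_one]) hY1 hX1
    (le_trans (by gcongr) h2) hp0 hp1 hpX
  refine hst.trans (le_trans ?_ hM.le)
  apply pow_le_pow_of_le_one (by norm_num) (by norm_num)
  have hL16 : 16 ≤ Real.logb 2 q := by linarith
  have hc1 : 1 ≤ c := by
    rw [hc, hK]
    have : (1:ℝ) ≤ 2 ^ (2 * d + 4) := one_le_pow₀ (by norm_num)
    have h5 : 1 ≤ (d:ℝ) * 2 ^ (2 * d + 4) := by nlinarith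
    nlinarith
  have hX : (M:ℝ) ≤ c * X := by
    have : Real.logb 2 q ≤ X := by nlinarith
    nlinarith
  have := hX.trans (Nat.le_ceil (c * X))
  exact_mod_cast this

end RT

/-- Upper bounds for the largest general position subset of a
`p`-random subset of `𝔽_q^d` in the two lower ranges of `p`. -/
theorem random_turan_upper_Fqd_low_range (d : ℕ) (hd : 2 ≤ d) :
    ∃ c : ℝ, 0 < c ∧ ∀ δ : ℝ, 0 < δ → ∃ Q : ℕ, ∀ q : ℕ, Q ≤ q → IsPrimePow q →
      ∀ (F : Type) [Field F] [Fintype F], Fintype.card F = q →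
        ∀ p : ℝ, 0 ≤ p → p ≤ 1 →
          ((p ≤ (q : ℝ) ^ (-(d : ℝ) + 2 / (d : ℝ)) * (Real.logb 2 q) ^ 2 →
            bernoulliProb (Fin d → F) p
              (fun S => ∃ T : Finset (Fin d → F), T ⊆ S ∧ IsGenPos F d ↑T ∧
                c * (q : ℝ) ^ ((1 : ℝ) / (d : ℝ)) * (Real.logb 2 q) ^ 2 ≤ (T.card : ℝ))
              ≤ δ) ∧
          ((q : ℝ) ^ (-(d : ℝ) + 2 / (d : ℝ)) * (Real.logb 2 q) ^ 2 ≤ p →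
            p ≤ (q : ℝ) ^ (-(d : ℝ) + 2 * (d : ℝ) / ((d : ℝ) + 1)) *
              (Real.logb 2 q) ^ 2 →
            bernoulliProb (Fin d → F) p
              (fun S => ∃ T : Finset (Fin d → F), T ⊆ S ∧ IsGenPos F d ↑T ∧
                c * p ^ ((1 : ℝ) / 2) * (q : ℝ) ^ ((d : ℝ) / 2) * Real.logb 2 q
                  ≤ (T.card : ℝ)) ≤ δ)) := by
  obtain ⟨c, hc, H⟩ := RT.core hd
  refine ⟨c, hc, fun δ hδ => ?_⟩
  obtain ⟨Q, hQ2, H⟩ := H δ hδ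
  refine ⟨Q, fun q hq _ F _ _ hF p hp0 hp1 => ?_⟩
  have H := H q hq F hF p
  have hdR : (2:ℝ) ≤ d := by exact_mod_cast hd
  have hqR : (2:ℝ) ≤ q := by exact_mod_cast hQ2.trans hq
  have hq0 : (0:ℝ) < q := by linarith
  have hL : 0 ≤ Real.logb 2 q := Real.logb_nonneg (by norm_num) (by linarith)
  have hexp : (1:ℝ) / d ≤ d / (d + 1) := by
    rw [div_le_div_iff₀ (by positivity) (by positivity)]; nlinarith
  constructor
  · intro hp
    have := H ((q : ℝ) ^ ((1 : ℝ) / (d : ℝ)) * (Real.logb 2 q) ^ 2) hp0 hp1 le_rfl (by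
      gcongr
      linarith) (by
      calc p * (q : ℝ) ^ d * (Real.logb 2 q) ^ 2
          ≤ ((q : ℝ) ^ (-(d : ℝ) + 2 / (d : ℝ)) * (Real.logb 2 q) ^ 2) * (q : ℝ) ^ d *
            (Real.logb 2 q) ^ 2 := by gcongr
        _ = ((q : ℝ) ^ (-(d : ℝ) + 2 / (d : ℝ)) * (q : ℝ) ^ (d:ℝ)) * (Real.logb 2 q) ^ 4 := by
          rw [Real.rpow_natCast]; ring
        _ = ((q : ℝ) ^ ((1 : ℝ) / (d : ℝ))) ^ 2 * (Real.logb 2 q) ^ 4 := by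
          rw [← Real.rpow_add hq0, ← Real.rpow_natCast (_ ^ _) 2, ← Real.rpow_mul hq0.le]
          congr 2
          push_cast
          ring
        _ = _ := by ring
        _ ≤ _ := le_rfl)
    simpa only [mul_assoc] using this
  · intro hpl hpu
    have hsq : (p ^ ((1:ℝ) / 2)) ^ 2 = p := by
      rw [← Real.rpow_natCast, ← Real.rpow_mul hp0]; norm_num
    have hqsq : ((q:ℝ) ^ ((d:ℝ) / 2)) ^ 2 = (q:ℝ) ^ d := by
      rw [← Real.rpow_natCast, ← Real.rpow_mul hq0.le, ← Real.rpow_natCast]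
      congr 1; push_cast; ring
    have key : ∀ a : ℝ, ((q : ℝ) ^ (-(d : ℝ) + 2 * a) * (Real.logb 2 q) ^ 2) ^ ((1:ℝ) / 2) *
        (q:ℝ) ^ ((d:ℝ) / 2) * Real.logb 2 q = (q:ℝ) ^ a * (Real.logb 2 q) ^ 2 := by
      intro a
      rw [Real.mul_rpow (by positivity) (by positivity), ← Real.rpow_mul hq0.le,
        ← Real.rpow_natCast (Real.logb 2 q) 2, ← Real.rpow_mul hL]
      have e : (q:ℝ) ^ a = (q : ℝ) ^ ((-(d : ℝ) + 2 * a) * (1 / 2)) * (q:ℝ) ^ ((d:ℝ) / 2) := by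
        rw [← Real.rpow_add hq0]; congr 1; ring
      rw [e]
      norm_num
      ring
    have k1 := key (1 / d)
    have k2 := key (d / (d + 1))
    rw [show 2 * ((1:ℝ) / d) = 2 / d by ring] at k1
    rw [← mul_div_assoc] at k2
    have := H (p ^ ((1:ℝ) / 2) * (q:ℝ) ^ ((d:ℝ) / 2) * Real.logb 2 q) hp0 hp1
      (by rw [← k1]; gcongr) (by rw [← k2]; gcongr) (by
        rw [mul_pow, mul_pow, hsq, hqsq])
    simpa only [mul_assoc] using this
end

section
/- For every integer d ≥ 3 there exists a constant c > 0 such that for every prime power q, every point set P ⊆ 𝔽_q^d of size at least c·q^{d−2} contains a critical coplanar (d+1)-tuple; that is, there exist d+1 points of P that are affinely dependent and such that every proper subset of these d+1 points is affinely independent. -/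
set_option linter.unusedSectionVars false

section helpers
open Module Finset

variable {F V : Type} [Field F] [Fintype F] [AddCommGroup V] [Module F V] [Finite V]

open Classical in
/-- An affine subspace of dimension at most `k` has at most `q ^ k` points. -/
lemma card_flat_le (P : Finset V) (A : AffineSubspace F V) (k : ℕ)
    (hA : finrank F A.direction ≤ k) :
    (P.filter (· ∈ A)).card ≤ Fintype.card F ^ k := by
  have := Fintype.ofFinite V
  rcases (P.filter (· ∈ A)).eq_empty_or_nonempty with h | ⟨p, hp⟩
  · simp [h]
  have hpA := (Finset.mem_filter.1 hp).2
  have h1 : (P.filter (· ∈ A)).card ≤ Fintype.card A.direction := by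
    rw [← Finset.card_univ]
    refine Finset.card_le_card_of_injOn
      (fun x => if h : x ∈ A then ⟨x -ᵥ p, A.vsub_mem_direction h hpA⟩ else 0) (by simp) ?_
    intro x hx y hy hxy
    have hx' := (Finset.mem_filter.1 hx).2
    have hy' := (Finset.mem_filter.1 hy).2
    simpa [hx', hy'] using hxy
  rw [Module.card_eq_pow_finrank (K := F)] at h1
  exact h1.trans (Nat.pow_le_pow_right Fintype.card_pos hA)

open Classical in
/-- A hyperplane section of a flat. -/
lemma card_filter_inf_le (P : Finset V) (G A : AffineSubspace F V) (k : ℕ) (x : V)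
    (hxG : x ∈ G) (hxA : x ∉ A) (hG : finrank F G.direction ≤ k + 1) :
    ((P.filter (· ∈ A)).filter (· ∈ G)).card ≤ Fintype.card F ^ k := by
  have e : (P.filter (· ∈ A)).filter (· ∈ G) = P.filter (· ∈ A ⊓ G) := by
    ext; simp [AffineSubspace.mem_inf_iff, and_assoc]
  rw [e]
  rcases (P.filter (· ∈ A ⊓ G)).eq_empty_or_nonempty with h | ⟨p, hp⟩
  · simp [h]
  have hp' := (Finset.mem_filter.1 hp).2
  apply card_flat_le
  have hlt : A ⊓ G < G := by
    refine lt_of_le_of_ne inf_le_right fun h => hxA ?_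
    rw [← h] at hxG
    exact hxG.1
  have := Submodule.finrank_lt_finrank_of_lt (AffineSubspace.direction_lt_of_nonempty hlt ⟨p, hp'⟩)
  omega

/-- Dimension of span of independent set. -/
lemma finrank_span (s : Finset V) (hs : AffineIndependent F ((↑) : s → V)) (n : ℕ)
    (hc : s.card = n + 1) : finrank F (affineSpan F (s : Set V)).direction = n := by
  have := hs.finrank_vectorSpan (n := n) (by simpa using hc)
  rw [direction_affineSpan]
  rwa [show Set.range ((↑) : s → V) = (s : Set V) from Subtype.range_coe] at this

lemma finrank_span_le (s : Finset V) (hs : AffineIndependent F ((↑) : s → V)) (n : ℕ)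
    (hc : s.card ≤ n + 1) : finrank F (affineSpan F (s : Set V)).direction ≤ n := by
  rcases Nat.eq_zero_or_pos s.card with h | h
  · rw [Finset.card_eq_zero] at h
    subst h
    rw [direction_affineSpan, coe_empty, vectorSpan_empty, finrank_bot]
    exact Nat.zero_le _
  · rw [finrank_span s hs (s.card - 1) (by omega)]
    omega

lemma indep_mono {s t : Finset V} (hs : AffineIndependent F ((↑) : t → V)) (h : s ⊆ t) :
    AffineIndependent F ((↑) : s → V) :=
  AffineIndependent.mono (s := (s : Set V)) (t := (t : Set V)) hs (by exact_mod_cast h)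

open Classical in
lemma indep_insert [DecidableEq V] {s : Finset V} (hs : AffineIndependent F ((↑) : s → V)) {y : V}
    (hy : y ∉ affineSpan F (s : Set V)) :
    AffineIndependent F ((↑) : ↥(insert y s : Finset V) → V) := by
  have hys : y ∉ s := fun h => hy (mem_affineSpan F (by exact_mod_cast h))
  let i : (insert y s : Finset V) := ⟨y, by simp⟩
  refine AffineIndependent.affineIndependent_of_notMem_span (i := i) ?_ ?_
  · let f : {z : (insert y s : Finset V) // z ≠ i} ↪ s :=
      ⟨fun z => ⟨z.1.1, by
        have h1 := z.1.2
        rcases Finset.mem_insert.1 h1 with h | h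
        · exact absurd (Subtype.ext h) z.2
        · exact h⟩, by
        intro a b hab
        exact Subtype.ext (Subtype.ext (by simpa using hab))⟩
    exact hs.comp_embedding f
  · intro h
    refine hy (affineSpan_mono F ?_ h)
    rintro _ ⟨z, hz, rfl⟩
    rcases Finset.mem_insert.1 z.2 with h | h
    · exact absurd (Subtype.ext h) hz
    · exact_mod_cast h

open Classical in
lemma notMem_span_erase [DecidableEq V] {s : Finset V} (hs : AffineIndependent F ((↑) : s → V)) {y : V}
    (hy : y ∈ s) : y ∉ affineSpan F ((s.erase y : Finset V) : Set V) := by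
  have := hs.notMem_affineSpan_sdiff ⟨y, hy⟩ Set.univ
  intro h
  apply this
  refine affineSpan_mono F ?_ h
  intro z hz
  have hz' := Finset.mem_erase.1 (Finset.mem_coe.1 hz)
  exact ⟨⟨z, hz'.2⟩, ⟨trivial, fun h => hz'.1 (congrArg Subtype.val h)⟩, rfl⟩

open Classical in
/-- Greedy extension of an independent set. -/
lemma greedy [DecidableEq V] (S s0 : Finset V) (h0 : AffineIndependent F ((↑) : s0 → V)) (m : ℕ)
    (H : ∀ s : Finset V, s0 ⊆ s → s ⊆ s0 ∪ S → AffineIndependent F ((↑) : s → V) →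
      s.card < s0.card + m → ∃ p ∈ S, p ∉ affineSpan F (s : Set V)) :
    ∃ s : Finset V, s0 ⊆ s ∧ s ⊆ s0 ∪ S ∧ AffineIndependent F ((↑) : s → V) ∧
      s.card = s0.card + m := by
  induction m with
  | zero => exact ⟨s0, subset_rfl, subset_union_left, h0, rfl⟩
  | succ m ih =>
    obtain ⟨s, h1, h2, h3, h4⟩ := ih fun s a b c d => H s a b c (by omega)
    obtain ⟨p, hp, hps⟩ := H s h1 h2 h3 (by omega)
    have : p ∉ s := fun h => hps (mem_affineSpan F (by exact_mod_cast h))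
    refine ⟨insert p s, h1.trans (subset_insert _ _), ?_, indep_insert h3 hps, ?_⟩
    · exact insert_subset (mem_union_right _ hp) h2
    · rw [card_insert_of_notMem this]; omega

open Classical in
/-- Avoiding a family of flats. -/
lemma avoid (S s : Finset V) (G : V → AffineSubspace F V) (N : ℕ)
    (hN : ∀ i ∈ s, (S.filter (· ∈ G i)).card ≤ N) (h : s.card * N < S.card) :
    ∃ p ∈ S, ∀ i ∈ s, p ∉ G i := by
  by_contra! hc
  have hsub : S ⊆ s.biUnion fun i => S.filter (· ∈ G i) := by
    intro p hp
    obtain ⟨i, hi, hpi⟩ := hc p hp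
    exact mem_biUnion.2 ⟨i, hi, mem_filter.2 ⟨hp, hpi⟩⟩
  have := (card_le_card hsub).trans (card_biUnion_le_card_mul _ _ N hN)
  omega

open Classical in
/-- Pigeonhole over the hyperplanes through a codimension two flat. -/
lemma pigeon (S : Finset V) (W : AffineSubspace F V) (w : V) (hw : w ∈ W)
    (hW : finrank F W.direction + 2 = finrank F V) (N : ℕ) (hS : ∀ x ∈ S, x ∉ W)
    (h : (Fintype.card F + 1) * N < S.card) :
    ∃ x ∈ S, N < (S.filter (· ∈ affineSpan F (insert x (W : Set V)))).card := by
  have : Module.Finite F V := Module.Finite.of_finite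
  have hq : finrank F (V ⧸ W.direction) = finrank F (F × F) := by
    have := Submodule.finrank_quotient_add_finrank W.direction
    rw [finrank_prod]
    simp only [finrank_self]
    omega
  let φ : V →ₗ[F] F × F := (LinearEquiv.ofFinrankEq _ _ hq).toLinearMap ∘ₗ W.direction.mkQ
  have hφ : ∀ v, φ v = 0 → v ∈ W.direction := by
    intro v hv
    simpa [φ] using hv
  let f : V → Option F := fun x =>
    if (φ (x - w)).2 = 0 then none else some ((φ (x - w)).1 / (φ (x - w)).2)
  obtain ⟨c, -, hc⟩ := Finset.exists_lt_card_fiber_of_mul_lt_card_of_maps_to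
    (s := S) (t := (univ : Finset (Option F))) (f := f) (n := N) (by simp) (by simpa using h)
  obtain ⟨x, hx⟩ := Finset.card_pos.1 (lt_of_le_of_lt (Nat.zero_le _) hc)
  obtain ⟨hxS, hxc⟩ := mem_filter.1 hx
  refine ⟨x, hxS, hc.trans_le (card_le_card ?_)⟩
  intro y hy
  obtain ⟨hyS, hyc⟩ := mem_filter.1 hy
  refine mem_filter.2 ⟨hyS, ?_⟩
  have hx0 : φ (x - w) ≠ 0 := by
    intro h0
    have := hφ _ h0
    exact hS x hxS ((AffineSubspace.vsub_right_mem_direction_iff_mem hw x).1 this)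
  have key : ∃ r : F, φ (y - w) = r • φ (x - w) := by
    have hf : f x = f y := by rw [hxc, hyc]
    simp only [f] at hf
    generalize φ (x - w) = a at *
    generalize φ (y - w) = b at *
    obtain ⟨a1, a2⟩ := a
    obtain ⟨b1, b2⟩ := b
    by_cases ha : a2 = 0
    · by_cases hb : b2 = 0
      · subst ha hb
        have : a1 ≠ 0 := by rintro rfl; exact hx0 rfl
        exact ⟨b1 / a1, by ext <;> simp [this]⟩
      · simp [ha, hb] at hf
    · by_cases hb : b2 = 0
      · simp [ha, hb] at hf
      · simp only [ha, hb, if_false, Option.some.injEq] at hf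
        refine ⟨b2 / a2, ?_⟩
        ext
        · simp only [Prod.smul_mk, smul_eq_mul]
          field_simp at hf ⊢
          linear_combination -hf
        · simp [ha]
  obtain ⟨r, hr⟩ := key
  have hd : y - w - r • (x - w) ∈ W.direction := hφ _ (by rw [map_sub, map_smul, hr, sub_self])
  set H := affineSpan F (insert x (W : Set V)) with hH
  have hWH : W ≤ H := fun z hz => subset_affineSpan F _ (Set.mem_insert_of_mem _ hz)
  have hxH : x ∈ H := subset_affineSpan F _ (Set.mem_insert _ _)
  refine (AffineSubspace.vsub_right_mem_direction_iff_mem (hWH hw) y).1 ?_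
  have h1 := AffineSubspace.direction_le hWH hd
  have h2 := H.direction.smul_mem r (AffineSubspace.vsub_mem_direction hxH (hWH hw))
  have := H.direction.add_mem h1 h2
  simpa using this

end helpers

section main
open Module Finset

variable {F : Type} [Field F] [Fintype F]

open Classical in
/-- The criticality criterion. -/
lemma critical_of {d : ℕ} (hd : 2 ≤ d) (s : Finset (Fin d → F))
    (hs : AffineIndependent F ((↑) : s → (Fin d → F))) (hc : s.card = d) (y : Fin d → F)
    (hy : y ∈ affineSpan F (s : Set (Fin d → F)))
    (h : ∀ i ∈ s, y ∉ affineSpan F ((s.erase i : Finset (Fin d → F)) : Set (Fin d → F))) :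
    IsCriticalCoplanar F d (insert y s) := by
  have hys : y ∉ s := by
    intro hys
    obtain ⟨i, hi, hne⟩ := exists_mem_ne (by omega : 1 < s.card) y
    exact h i hi (mem_affineSpan F (by simp [hys, hne.symm]))
  refine ⟨by rw [card_insert_of_notMem hys, hc], ?_, ?_⟩
  · intro hi
    have := notMem_span_erase hi (mem_insert_self y s)
    rw [erase_insert hys] at this
    exact this hy
  · intro u hu
    obtain ⟨j, hj, hju⟩ := exists_of_ssubset hu
    by_cases hjy : j = y
    · subst hjy
      refine indep_mono hs fun z hz => ?_
      rcases mem_insert.1 (hu.1 hz) with h | h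
      · subst h; exact absurd hz hju
      · exact h
    · have hjs : j ∈ s := (mem_insert.1 hj).resolve_left hjy
      refine indep_mono (indep_insert (indep_mono hs (erase_subset j s)) (h j hjs)) fun z hz => ?_
      rcases mem_insert.1 (hu.1 hz) with h | h
      · simp [h]
      · refine mem_insert_of_mem (mem_erase.2 ⟨?_, h⟩)
        rintro rfl
        exact hju hz

open Classical in
lemma case_one (e : ℕ) (P : Finset (Fin (e + 3) → F)) (A : AffineSubspace F (Fin (e + 3) → F))
    (hA : finrank F A.direction = e + 1)
    (hPA : (e + 3) * Fintype.card F ^ e < (P.filter (· ∈ A)).card)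
    (hP : (Fintype.card F + 1) * 1 < (P.filter (· ∉ A)).card) :
    ∃ t, t ⊆ P ∧ IsCriticalCoplanar F (e + 3) t := by
  have hq : 0 < Fintype.card F ^ e := pow_pos Fintype.card_pos e
  obtain ⟨w, hw⟩ := card_pos.1 (lt_of_le_of_lt (Nat.zero_le _) hPA)
  have hwA := (mem_filter.1 hw).2
  obtain ⟨x, hx, hN⟩ := pigeon (P.filter (· ∉ A)) A w hwA (by simp [hA]) 1
    (fun x hx => (mem_filter.1 hx).2) hP
  obtain ⟨y, hy, hyx⟩ := exists_mem_ne hN x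
  obtain ⟨hxP, hxA⟩ := mem_filter.1 hx
  obtain ⟨hy, hyH⟩ := mem_filter.1 hy
  obtain ⟨hyP, hyA⟩ := mem_filter.1 hy
  set H := affineSpan F (insert x (A : Set (Fin (e + 3) → F))) with hH
  have hAH : A ≤ H := fun z hz => subset_affineSpan F _ (Set.mem_insert_of_mem _ hz)
  have hxH : x ∈ H := subset_affineSpan F _ (Set.mem_insert _ _)
  have hHd : finrank F H.direction ≤ e + 2 := by
    rw [hH, direction_affineSpan]
    have := finrank_vectorSpan_insert_le A x
    omega
  have h0 : AffineIndependent F ((↑) : ↥({y, x} : Finset (Fin (e + 3) → F)) → (Fin (e + 3) → F)) := by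
    refine indep_insert (s := {x}) ?_ ?_
    · have : Subsingleton ({x} : Finset (Fin (e + 3) → F)) := by
        constructor
        rintro ⟨a, ha⟩ ⟨b, hb⟩
        simp only [mem_singleton] at ha hb
        simp [ha, hb]
      exact affineIndependent_of_subsingleton F _
    · simpa using hyx
  have hc0 : ({y, x} : Finset (Fin (e + 3) → F)).card = 2 := card_pair hyx
  obtain ⟨s, hs0, hsS, hsi, hsc⟩ := greedy (P.filter (· ∈ A)) {y, x} h0 (e + 1) (by
    intro s h1 h2 h3 h4
    by_contra! hcon
    have hle := card_filter_inf_le P (affineSpan F (s : Set _)) A e x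
      (mem_affineSpan F (by exact_mod_cast h1 (by simp))) hxA
      (finrank_span_le s h3 (e + 1) (by omega))
    rw [filter_true_of_mem hcon] at hle
    nlinarith)
  have hsc' : s.card = e + 3 := by omega
  have hsH : affineSpan F (s : Set (Fin (e + 3) → F)) = H := by
    have hle : affineSpan F (s : Set (Fin (e + 3) → F)) ≤ H := by
      rw [affineSpan_le]
      intro z hz
      rcases mem_union.1 (hsS hz) with h | h
      · simp only [mem_insert, mem_singleton] at h
        rcases h with rfl | rfl
        · exact hyH
        · exact hxH
      · exact hAH (mem_filter.1 h).2
    refine AffineSubspace.eq_of_direction_eq_of_nonempty_of_le ?_ ?_ hle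
    · refine Submodule.eq_of_le_of_finrank_le (AffineSubspace.direction_le hle) ?_
      rw [finrank_span s hsi (e + 2) hsc']
      exact hHd
    · exact ⟨x, mem_affineSpan F (by exact_mod_cast hs0 (by simp))⟩
  obtain ⟨p, hp, hpi⟩ := avoid (P.filter (· ∈ A)) s
    (fun i => affineSpan F ((s.erase i : Finset _) : Set (Fin (e + 3) → F)))
    (Fintype.card F ^ e) (by
      intro i hi
      have hr : finrank F (affineSpan F
          ((s.erase i : Finset _) : Set (Fin (e + 3) → F))).direction ≤ e + 1 :=
        finrank_span_le _ (indep_mono hsi (erase_subset _ _)) _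
          (by rw [card_erase_of_mem hi]; omega)
      by_cases hix : i = x
      · exact card_filter_inf_le P _ A e y (mem_affineSpan F (mem_coe.2 (mem_erase.2
          ⟨by rw [hix]; exact hyx, hs0 (by simp)⟩))) hyA hr
      · exact card_filter_inf_le P _ A e x (mem_affineSpan F (mem_coe.2 (mem_erase.2
          ⟨fun h => hix h.symm, hs0 (by simp)⟩))) hxA hr) (by rw [hsc']; exact hPA)
  obtain ⟨hpP, hpA⟩ := mem_filter.1 hp
  refine ⟨insert p s, insert_subset hpP ?_,
    critical_of (by omega) s hsi hsc' p (by rw [hsH]; exact hAH hpA) hpi⟩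
  intro z hz
  rcases mem_union.1 (hsS hz) with h | h
  · simp only [mem_insert, mem_singleton] at h
    rcases h with rfl | rfl
    · exact hyP
    · exact hxP
  · exact (mem_filter.1 h).1

open Classical in
lemma case_two (e : ℕ) (P : Finset (Fin (e + 3) → F))
    (hA : ∀ A : AffineSubspace F (Fin (e + 3) → F), finrank F A.direction = e + 1 →
      (P.filter (· ∈ A)).card ≤ (e + 3) * Fintype.card F ^ e)
    (hP : Fintype.card F ^ (e + 1) + (Fintype.card F + 1) *
      ((e + 3) * ((e + 3) * Fintype.card F ^ e)) < P.card) :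
    ∃ t, t ⊆ P ∧ IsCriticalCoplanar F (e + 3) t := by
  obtain ⟨s, -, hsP, hsi, hsc⟩ := greedy (F := F) P ∅
    (by
      have : IsEmpty (∅ : Finset (Fin (e + 3) → F)) := ⟨fun x => absurd x.2 (notMem_empty _)⟩
      exact affineIndependent_of_subsingleton F _) (e + 2) (by
    intro s h1 h2 h3 h4
    by_contra! hcon
    have hle := card_flat_le P (affineSpan F (s : Set _)) (e + 1)
      (finrank_span_le s h3 (e + 1) (by simp at h4; omega))
    rw [filter_true_of_mem hcon] at hle
    omega)
  simp only [card_empty, zero_add, empty_union] at hsc hsP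
  have hWd := finrank_span s hsi (e + 1) hsc
  set W := affineSpan F (s : Set (Fin (e + 3) → F)) with hW
  obtain ⟨w, hw⟩ := card_pos.1 (by omega : 0 < s.card)
  have hwW : w ∈ W := mem_affineSpan F (mem_coe.2 hw)
  have hsplit := card_filter_add_card_filter_not (s := P) (fun z => z ∈ W)
  have hWc := card_flat_le P W (e + 1) hWd.le
  obtain ⟨x, hx, hN⟩ := pigeon (P.filter (· ∉ W)) W w hwW (by simp [hWd]) 
    ((e + 3) * ((e + 3) * Fintype.card F ^ e))
    (fun x hx => (mem_filter.1 hx).2) (by omega)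
  obtain ⟨hxP, hxW⟩ := mem_filter.1 hx
  have hxs : x ∉ s := fun h => hxW (mem_affineSpan F (mem_coe.2 h))
  have hbi := indep_insert hsi hxW
  have hbc : (insert x s).card = e + 3 := by rw [card_insert_of_notMem hxs]; omega
  obtain ⟨p, hp, hpi⟩ := avoid
    ((P.filter (· ∉ W)).filter (· ∈ affineSpan F (insert x (W : Set _)))) (insert x s)
    (fun i => affineSpan F (((insert x s).erase i : Finset _) : Set (Fin (e + 3) → F)))
    ((e + 3) * Fintype.card F ^ e) (by
      intro i hi
      refine (card_le_card ?_).trans (hA (affineSpan F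
          (((insert x s).erase i : Finset _) : Set (Fin (e + 3) → F)))
        (finrank_span _ (indep_mono hbi (erase_subset _ _)) _
          (by rw [card_erase_of_mem hi]; omega)))
      intro z hz
      simp only [mem_filter] at hz ⊢
      exact ⟨hz.1.1.1, hz.2⟩) (by rw [hbc]; exact hN)
  obtain ⟨hp, hpH⟩ := mem_filter.1 hp
  obtain ⟨hpP, -⟩ := mem_filter.1 hp
  refine ⟨insert p (insert x s), insert_subset hpP (insert_subset hxP hsP),
    critical_of (by omega) _ hbi hbc p ?_ hpi⟩
  rw [hW, affineSpan_insert_affineSpan] at hpH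
  simpa using hpH

end main

/-- For every `d ≥ 3`, every point set `P ⊆ 𝔽_q^d` of size at least
`c·q^{d−2}` contains a critical coplanar `(d+1)`-tuple. -/
theorem exists_critical_coplanar_tuple (d : ℕ) (hd : 3 ≤ d) :
    ∃ c : ℝ, 0 < c ∧ ∀ q : ℕ, IsPrimePow q →
      ∀ (F : Type) [Field F] [Fintype F], Fintype.card F = q →
        ∀ P : Finset (Fin d → F), c * (q : ℝ) ^ (d - 2) ≤ (P.card : ℝ) →
          ∃ t : Finset (Fin d → F), t ⊆ P ∧ IsCriticalCoplanar F d t := by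
  classical
  obtain ⟨e, rfl⟩ : ∃ e, d = e + 3 := ⟨d - 3, by omega⟩
  refine ⟨((2 * (e + 3) ^ 2 + 2 : ℕ) : ℝ), by positivity, ?_⟩
  intro q _ F _ _ hq P hP
  have hP' : (2 * (e + 3) ^ 2 + 2) * q ^ (e + 1) ≤ P.card := by
    have h : e + 3 - 2 = e + 1 := by omega
    rw [h] at hP
    exact_mod_cast hP
  subst hq
  set q := Fintype.card F with hqd
  have hq2 : 1 < q := Fintype.one_lt_card
  have hqe : 0 < q ^ e := pow_pos (by omega) e
  have hps : q ^ (e + 1) = q * q ^ e := pow_succ' q e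
  by_cases hA : ∀ A : AffineSubspace F (Fin (e + 3) → F), Module.finrank F A.direction = e + 1 →
      (P.filter (· ∈ A)).card ≤ (e + 3) * q ^ e
  · apply case_two e P hA
    rw [← hqd]
    have h1 : (q + 1) * ((e + 3) * ((e + 3) * q ^ e)) ≤ 2 * (e + 3) ^ 2 * q ^ (e + 1) := by
      calc (q + 1) * ((e + 3) * ((e + 3) * q ^ e))
          ≤ (2 * q) * ((e + 3) * ((e + 3) * q ^ e)) := Nat.mul_le_mul_right _ (by omega)
        _ = _ := by rw [hps]; ring
    have h2 : 0 < q ^ (e + 1) := pow_pos (by omega) _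
    nlinarith
  · push Not at hA
    obtain ⟨A, hA1, hA2⟩ := hA
    apply case_one e P A hA1 hA2
    rw [← hqd]
    have hsplit := Finset.card_filter_add_card_filter_not (s := P) (fun z => z ∈ A)
    have hWc := card_flat_le P A (e + 1) hA1.le
    rw [← hqd] at hWc
    have h2 : q ≤ q ^ (e + 1) := by rw [hps]; exact Nat.le_mul_of_pos_right q hqe
    have h3 : 3 * q ^ (e + 1) ≤ (2 * (e + 3) ^ 2 + 2) * q ^ (e + 1) :=
      Nat.mul_le_mul_right _ (by nlinarith)
    omega
end
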